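/- Interaction Böhm-out: let t, u be λ-terms with t ⊑Bλη u and not t ⊑B u. Then there exists an ordinary context C such that C^◦⟨t^•⟩⇓^i and C^◦⟨u^•⟩⇓^{i'} with i ≠ i' (where C^◦ is the white lifting of C and t^•, u^• are the black liftings of t, u). -/

import Mathlib

set_option autoImplicit false

/-! ### Players -/

inductive Player : Type
  | white
  | black
deriving DecidableEq

/-- The opposite player. -/
def Player.op : Player → Player
  | .white => .black
  | .black => .white

/-- `gamma p q` is `0` if the players agree (silent) and `1` otherwise (interaction). -/
def Player.gamma (p q : Player) : ℕ := if p = q then 0 else 1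

/-! ### Ordinary λ-terms (de Bruijn representation) -/

inductive Lam : Type
  | var : ℕ → Lam
  | lam : Lam → Lam
  | app : Lam → Lam → Lam
deriving DecidableEq

namespace Lam

/-- Shift the free de Bruijn indices ≥ `d` by one. -/
def liftAt : Lam → ℕ → Lam
  | .var n, d => .var (if n < d then n else n + 1)
  | .lam t, d => .lam (t.liftAt (d + 1))
  | .app t u, d => .app (t.liftAt d) (u.liftAt d)

/-- Capture-avoiding substitution of `u` for the de Bruijn index `x`. -/
def subst : Lam → ℕ → Lam → Lam
  | .var n, x, u => if n = x then u else if x < n then .var (n - 1) else .var n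
  | .lam t, x, u => .lam (t.subst (x + 1) (u.liftAt 0))
  | .app t s, x, u => .app (t.subst x u) (s.subst x u)

end Lam

/-- Root β-rule: `(λx.t) u ↦ t[x:=u]`. -/
inductive LBetaRoot : Lam → Lam → Prop
  | beta (t u : Lam) : LBetaRoot (.app (.lam t) u) (t.subst 0 u)

/-- Root η-rule: `λx. t x ↦ t` with `x ∉ FV(t)` (enforced by the lifting). -/
inductive LEtaRoot : Lam → Lam → Prop
  | eta (t : Lam) : LEtaRoot (.lam (.app (t.liftAt 0) (.var 0))) t

/-- Closure of a root relation under all contexts. -/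
inductive LFull (R : Lam → Lam → Prop) : Lam → Lam → Prop
  | root {t u : Lam} : R t u → LFull R t u
  | lam {t u : Lam} : LFull R t u → LFull R (.lam t) (.lam u)
  | appL {t t' : Lam} (u : Lam) : LFull R t t' → LFull R (.app t u) (.app t' u)
  | appR (t : Lam) {u u' : Lam} : LFull R u u' → LFull R (.app t u) (.app t u')

/-- Closure under applicative spine contexts `⟨·⟩ t1 … tk`. -/
inductive LSpine (R : Lam → Lam → Prop) : Lam → Lam → Prop
  | root {t u : Lam} : R t u → LSpine R t u
  | appL {t t' : Lam} (u : Lam) : LSpine R t t' → LSpine R (.app t u) (.app t' u)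

/-- Closure under head contexts `λx1…xn.⟨·⟩ t1 … tk`. -/
inductive LHead (R : Lam → Lam → Prop) : Lam → Lam → Prop
  | spine {t u : Lam} : LSpine R t u → LHead R t u
  | lam {t u : Lam} : LHead R t u → LHead R (.lam t) (.lam u)

/-- β-reduction. -/
def LBeta : Lam → Lam → Prop := LFull LBetaRoot
/-- η-reduction. -/
def LEta : Lam → Lam → Prop := LFull LEtaRoot
/-- Head reduction. -/
def LHStep : Lam → Lam → Prop := LHead LBetaRoot
/-- Multistep head reduction. -/
def LHSteps : Lam → Lam → Prop := Relation.ReflTransGen LHStep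

/-- β-conversion (reflexive-symmetric-transitive closure of β-reduction). -/
def LBetaConv : Lam → Lam → Prop :=
  Relation.ReflTransGen (fun a b => LBeta a b ∨ LBeta b a)
/-- η-conversion. -/
def LEtaConv : Lam → Lam → Prop :=
  Relation.ReflTransGen (fun a b => LEta a b ∨ LEta b a)

/-- Head normal forms: no head step out of `t`. -/
def Lam.LHNF (t : Lam) : Prop := ∀ u, ¬ LHStep t u

/-- Head convergence: `t ⇓h`. -/
def Lam.HConv (t : Lam) : Prop := ∃ h, LHSteps t h ∧ h.LHNF

/-- Ordinary contexts (one hole). -/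
inductive LCtx : Type
  | hole : LCtx
  | lam : LCtx → LCtx
  | appL : LCtx → Lam → LCtx
  | appR : Lam → LCtx → LCtx

/-- Plugging (allowing variable capture). -/
def LCtx.fill : LCtx → Lam → Lam
  | .hole, t => t
  | .lam C, t => .lam (C.fill t)
  | .appL C u, t => .app (C.fill t) u
  | .appR s C, t => .app s (C.fill t)

/-- Head contextual preorder on λ-terms. -/
def CtxLe (t u : Lam) : Prop := ∀ C : LCtx, (C.fill t).HConv → (C.fill u).HConv

/-! ### Checkers terms -/

inductive CTerm : Type
  | var : ℕ → CTerm
  | lam : Player → CTerm → CTerm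
  | app : Player → CTerm → CTerm → CTerm
deriving DecidableEq

namespace CTerm

/-- Shift the free de Bruijn indices ≥ `d` by one. -/
def liftAt : CTerm → ℕ → CTerm
  | .var n, d => .var (if n < d then n else n + 1)
  | .lam p t, d => .lam p (t.liftAt (d + 1))
  | .app p t u, d => .app p (t.liftAt d) (u.liftAt d)

/-- Capture-avoiding substitution of `u` for the de Bruijn index `x`. -/
def subst : CTerm → ℕ → CTerm → CTerm
  | .var n, x, u => if n = x then u else if x < n then .var (n - 1) else .var n
  | .lam p t, x, u => .lam p (t.subst (x + 1) (u.liftAt 0))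
  | .app p t s, x, u => .app p (t.subst x u) (s.subst x u)

/-- The underlying ordinary λ-term of a checkers term. -/
def untag : CTerm → Lam
  | .var n => .var n
  | .lam _ t => .lam t.untag
  | .app _ t u => .app t.untag u.untag

end CTerm

/-- Player lifting: tag every abstraction and application with player `p`. -/
def Lam.tag : Lam → Player → CTerm
  | .var n, _ => .var n
  | .lam t, p => .lam p (t.tag p)
  | .app t u, p => .app p (t.tag p) (u.tag p)

/-- Silent β root rule: the abstraction and the application carry the same player. -/
inductive SilentRoot : CTerm → CTerm → Prop
  | beta (p : Player) (t u : CTerm) : SilentRoot (.app p (.lam p t) u) (t.subst 0 u)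

/-- Interaction β root rule: the application carries the opposite player of the abstraction. -/
inductive InterRoot : CTerm → CTerm → Prop
  | beta (p : Player) (t u : CTerm) : InterRoot (.app p.op (.lam p t) u) (t.subst 0 u)

/-- Closure of a root relation under all checkers contexts. -/
inductive CFull (R : CTerm → CTerm → Prop) : CTerm → CTerm → Prop
  | root {t u : CTerm} : R t u → CFull R t u
  | lam (p : Player) {t u : CTerm} : CFull R t u → CFull R (.lam p t) (.lam p u)
  | appL (p : Player) {t t' : CTerm} (u : CTerm) : CFull R t t' → CFull R (.app p t u) (.app p t' u)
  | appR (p : Player) (t : CTerm) {u u' : CTerm} : CFull R u u' → CFull R (.app p t u) (.app p t u')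

/-- Closure under applicative spine contexts `⟨·⟩ @_{q1} t1 … @_{qk} tk`. -/
inductive CSpine (R : CTerm → CTerm → Prop) : CTerm → CTerm → Prop
  | root {t u : CTerm} : R t u → CSpine R t u
  | appL (p : Player) {t t' : CTerm} (u : CTerm) : CSpine R t t' → CSpine R (.app p t u) (.app p t' u)

/-- Closure under checkers head contexts `λ_{p1}x1…λ_{pn}xn.⟨·⟩ @_{q1} t1 … @_{qk} tk`. -/
inductive CHead (R : CTerm → CTerm → Prop) : CTerm → CTerm → Prop
  | spine {t u : CTerm} : CSpine R t u → CHead R t u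
  | lam (p : Player) {t u : CTerm} : CHead R t u → CHead R (.lam p t) (.lam p u)

/-- Silent β-reduction `→τ`. -/
def StepTau : CTerm → CTerm → Prop := CFull SilentRoot
/-- Interaction β-reduction `→⊛`. -/
def StepInt : CTerm → CTerm → Prop := CFull InterRoot
/-- Checkers β-reduction `→βch`. -/
def StepBch (t u : CTerm) : Prop := StepTau t u ∨ StepInt t u

/-- Silent head reduction `→hτ`. -/
def HStepTau : CTerm → CTerm → Prop := CHead SilentRoot
/-- Interaction head reduction `→h⊛`. -/
def HStepInt : CTerm → CTerm → Prop := CHead InterRoot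
/-- Checkers head reduction `→hch`. -/
def HStepCh (t u : CTerm) : Prop := HStepTau t u ∨ HStepInt t u

/-- Checkers head normal form. -/
def CTerm.HNF (t : CTerm) : Prop := ∀ u, ¬ HStepCh t u

/-- `BigStep t k` means `t ⇓^k`: the (deterministic) checkers head evaluation of `t`
terminates and performs exactly `k` interaction steps. -/
inductive BigStep : CTerm → ℕ → Prop
  | nf {t : CTerm} : t.HNF → BigStep t 0
  | silent {t u : CTerm} {k : ℕ} : HStepTau t u → BigStep u k → BigStep t k
  | inter {t u : CTerm} {k : ℕ} : HStepInt t u → BigStep u k → BigStep t (k + 1)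

/-- `HRed t n i u`: a checkers head reduction sequence from `t` to `u` of length `n`
containing exactly `i` interaction steps. -/
inductive HRed : CTerm → ℕ → ℕ → CTerm → Prop
  | refl (t : CTerm) : HRed t 0 0 t
  | silent {t u s : CTerm} {n i : ℕ} : HStepTau t u → HRed u n i s → HRed t (n + 1) i s
  | inter {t u s : CTerm} {n i : ℕ} : HStepInt t u → HRed u n i s → HRed t (n + 1) (i + 1) s

/-- Checkers contexts (one hole). -/
inductive CCtx : Type
  | hole : CCtx
  | lam : Player → CCtx → CCtx
  | appL : Player → CCtx → CTerm → CCtx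
  | appR : Player → CTerm → CCtx → CCtx

/-- Plugging (allowing variable capture). -/
def CCtx.fill : CCtx → CTerm → CTerm
  | .hole, t => t
  | .lam p C, t => .lam p (C.fill t)
  | .appL p C u, t => .app p (C.fill t) u
  | .appR p s C, t => .app p s (C.fill t)

/-- Player lifting of ordinary contexts. -/
def LCtx.tag : LCtx → Player → CCtx
  | .hole, _ => .hole
  | .lam C, p => .lam p (C.tag p)
  | .appL C u, p => .appL p (C.tag p) (u.tag p)
  | .appR s C, p => .appR p (s.tag p) (C.tag p)

/-- Checkers interaction preorder `≼ctx⊛` on checkers terms. -/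
def IntCtxLe (t u : CTerm) : Prop :=
  ∀ (C : CCtx) (k : ℕ), BigStep (C.fill t) k → BigStep (C.fill u) k

/-- Checkers interaction improvement `≼imp⊛` on checkers terms. -/
def ImpCtxLe (t u : CTerm) : Prop :=
  ∀ (C : CCtx) (k : ℕ), BigStep (C.fill t) k → ∃ k', k' ≤ k ∧ BigStep (C.fill u) k'

/-- Interaction preorder `⊑int` on ordinary λ-terms, via black lifting. -/
def IntLe (t u : Lam) : Prop := IntCtxLe (t.tag .black) (u.tag .black)

/-- Interaction improvement `⊑int·imp` on ordinary λ-terms, via black lifting. -/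
def ImpLe (t u : Lam) : Prop := ImpCtxLe (t.tag .black) (u.tag .black)

/-- Interaction equivalence `≡int`. -/
def IntEq (t u : Lam) : Prop := IntLe t u ∧ IntLe u t

/-- Silent conversion `=τ`: reflexive-symmetric-transitive closure of `→τ`. -/
def SilentConv : CTerm → CTerm → Prop :=
  Relation.ReflTransGen (fun a b => StepTau a b ∨ StepTau b a)


/-! ### Böhm preorders -/

/-- `n` abstractions in front of a term. -/
def Lam.absN : ℕ → Lam → Lam
  | 0, t => t
  | n + 1, t => .lam (Lam.absN n t)

/-- Left-nested application of a term to a list of arguments. -/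
def Lam.appList : Lam → List Lam → Lam
  | t, [] => t
  | t, u :: us => Lam.appList (.app t u) us

/-- One unfolding of the Böhm preorder clauses. -/
def BohmClause (R : Lam → Lam → Prop) (t u : Lam) : Prop :=
  (¬ t.HConv) ∨
    ∃ (n y : ℕ) (ts us : List Lam),
      ts.length = us.length ∧
      LHSteps t (Lam.absN n (Lam.appList (.var y) ts)) ∧
      LHSteps u (Lam.absN n (Lam.appList (.var y) us)) ∧
      ∀ (i : ℕ) (hi : i < ts.length) (hj : i < us.length), R (ts.get ⟨i, hi⟩) (us.get ⟨i, hj⟩)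

/-- The Böhm preorder `⊑B`: the largest relation closed under the clauses. -/
def BohmLe (t u : Lam) : Prop :=
  ∃ R : Lam → Lam → Prop, (∀ a b, R a b → BohmClause R a b) ∧ R t u

/-- One unfolding of the extensional Böhm preorder clauses. -/
def BohmEtaClause (R : Lam → Lam → Prop) (t u : Lam) : Prop :=
  (¬ t.HConv) ∨
    ∃ (n y : ℕ) (ts us : List Lam) (h h' : Lam),
      ts.length = us.length ∧
      LHSteps t h ∧ h.LHNF ∧ LEtaConv h (Lam.absN n (Lam.appList (.var y) ts)) ∧
      LHSteps u h' ∧ h'.LHNF ∧ LEtaConv h' (Lam.absN n (Lam.appList (.var y) us)) ∧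
      ∀ (i : ℕ) (hi : i < ts.length) (hj : i < us.length), R (ts.get ⟨i, hi⟩) (us.get ⟨i, hj⟩)

/-- The extensional Böhm preorder `⊑Bλη`: the largest relation closed under the clauses. -/
def BohmEtaLe (t u : Lam) : Prop :=
  ∃ R : Lam → Lam → Prop, (∀ a b, R a b → BohmEtaClause R a b) ∧ R t u

/-!
Feed `K`-tuples `P = λx₁…x_K. λs. s x₁ … x_K` to a term with head normal form `λx₁…xₙ. y t₁ … tₖ`,
where the term is black, the tuples and their applications are white, and `P` also replaces the free
variables. Each of the `n` abstractions interacts with the application of a tuple, and each of the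
`k` applications interacts with the tuple that has replaced `y`, so `n + k` interactions take place.
An η-expansion adds one abstraction and one argument, hence two interactions, so that head normal
forms which agree up to η but not in their numbers of abstractions are told apart by these numbers.
If they do agree in the number of abstractions, both terms perform the same number of interactions,
and a selector for `i` then continues with the `i`-th arguments. Consequently the pairs of terms in
the extensional Böhm preorder that are not separated in this way satisfy the clauses of the Böhm
preorder.
-/

/-! ### Renaming and substitution -/

namespace Lam

/-- The extension of a renaming under a binder. -/
def upRename (ρ : ℕ → ℕ) : ℕ → ℕ
  | 0 => 0
  | n + 1 => ρ n + 1

/-- Simultaneous renaming of the free variables. -/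
def rename : Lam → (ℕ → ℕ) → Lam
  | .var n, ρ => .var (ρ n)
  | .lam t, ρ => .lam (t.rename (upRename ρ))
  | .app t u, ρ => .app (t.rename ρ) (u.rename ρ)

/-- The extension of a simultaneous substitution under a binder. -/
def upSubst (σ : ℕ → Lam) : ℕ → Lam
  | 0 => .var 0
  | n + 1 => (σ n).rename Nat.succ

/-- Simultaneous substitution for the free variables. -/
def parSubst : Lam → (ℕ → Lam) → Lam
  | .var n, σ => σ n
  | .lam t, σ => .lam (t.parSubst (upSubst σ))
  | .app t u, σ => .app (t.parSubst σ) (u.parSubst σ)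

/-- The simultaneous substitution performed by `subst`. -/
def single (x : ℕ) (u : Lam) (n : ℕ) : Lam :=
  if n = x then u else if x < n then .var (n - 1) else .var n

theorem rename_rename (t : Lam) (ρ ρ' : ℕ → ℕ) :
    (t.rename ρ).rename ρ' = t.rename (ρ' ∘ ρ) := by
  induction t generalizing ρ ρ' with
  | var n => rfl
  | lam t ih =>
    simp only [rename, ih]
    congr 2
    funext n
    cases n <;> rfl
  | app t u iht ihu => simp only [rename, iht, ihu]

theorem parSubst_rename (t : Lam) (ρ : ℕ → ℕ) (σ : ℕ → Lam) :
    (t.rename ρ).parSubst σ = t.parSubst (σ ∘ ρ) := by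
  induction t generalizing ρ σ with
  | var n => rfl
  | lam t ih =>
    simp only [rename, parSubst, ih]
    congr 2
    funext n
    cases n <;> rfl
  | app t u iht ihu => simp only [rename, parSubst, iht, ihu]

theorem rename_parSubst (t : Lam) (σ : ℕ → Lam) (ρ : ℕ → ℕ) :
    (t.parSubst σ).rename ρ = t.parSubst fun n => (σ n).rename ρ := by
  induction t generalizing ρ σ with
  | var n => rfl
  | lam t ih =>
    simp only [rename, parSubst, ih]
    congr 2
    funext n
    cases n with
    | zero => rfl
    | succ n =>
      simp only [upSubst, rename_rename]
      rfl
  | app t u iht ihu => simp only [rename, parSubst, iht, ihu]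

theorem parSubst_var (t : Lam) : t.parSubst .var = t := by
  induction t with
  | var n => rfl
  | lam t ih =>
    have h : upSubst .var = .var := by
      funext n
      cases n <;> rfl
    rw [parSubst, h, ih]
  | app t u iht ihu => rw [parSubst, iht, ihu]

theorem rename_eq_parSubst (t : Lam) (ρ : ℕ → ℕ) : t.rename ρ = t.parSubst fun n => .var (ρ n) := by
  simpa only [parSubst_var, rename] using rename_parSubst t .var ρ

theorem rename_id (t : Lam) : t.rename id = t :=
  (rename_eq_parSubst t id).trans (parSubst_var t)

theorem liftAt_eq_rename (t : Lam) (d : ℕ) :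
    t.liftAt d = t.rename fun n => if n < d then n else n + 1 := by
  induction t generalizing d with
  | var n => rfl
  | lam t ih =>
    simp only [rename, liftAt, ih]
    congr 2
    funext n
    cases n <;> grind [upRename]
  | app t u iht ihu => simp only [rename, liftAt, iht, ihu]

theorem liftAt_zero (t : Lam) : t.liftAt 0 = t.rename Nat.succ :=
  liftAt_eq_rename t 0

theorem upSubst_single (x : ℕ) (u : Lam) :
    upSubst (single x u) = single (x + 1) (u.rename Nat.succ) := by
  funext n
  cases n <;> grind [upSubst, single, rename]

theorem subst_eq_parSubst (t : Lam) (x : ℕ) (u : Lam) : t.subst x u = t.parSubst (single x u) := by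
  induction t generalizing x u with
  | var n => rfl
  | lam t ih => simp only [subst, parSubst, ih, upSubst_single, liftAt_zero]
  | app t u iht ihu => simp only [subst, parSubst, iht, ihu]

theorem rename_subst (t u : Lam) (ρ : ℕ → ℕ) :
    (t.subst 0 u).rename ρ = (t.rename (upRename ρ)).subst 0 (u.rename ρ) := by
  simp only [subst_eq_parSubst, rename_parSubst, parSubst_rename]
  congr 1
  funext n
  cases n <;> rfl

theorem rename_succ_subst (t u : Lam) : (t.rename Nat.succ).subst 0 u = t := by
  rw [subst_eq_parSubst, parSubst_rename]
  exact parSubst_var t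

theorem rename_succ_parSubst_up (t : Lam) (σ : ℕ → Lam) :
    (t.rename Nat.succ).parSubst (upSubst σ) = (t.parSubst σ).rename Nat.succ := by
  rw [parSubst_rename, rename_parSubst]
  rfl

theorem rename_succ_rename_up (t : Lam) (ρ : ℕ → ℕ) :
    (t.rename Nat.succ).rename (upRename ρ) = (t.rename ρ).rename Nat.succ := by
  rw [rename_rename, rename_rename]
  rfl

theorem rename_succ_rename_pred (t : Lam) : (t.rename Nat.succ).rename Nat.pred = t :=
  (rename_rename t _ _).trans (rename_id t)

/-- The β-redex inside the η-expansion `λx. (λy. s) x` contracts back to `s`. -/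
theorem rename_up_succ_subst_var (s : Lam) :
    (s.rename (upRename Nat.succ)).subst 0 (.var 0) = s := by
  rw [subst_eq_parSubst, parSubst_rename]
  convert parSubst_var s using 2
  funext n
  cases n <;> rfl

/-- The number of nodes. -/
def size : Lam → ℕ
  | .var _ => 1
  | .lam t => t.size + 1
  | .app t u => t.size + u.size + 1

theorem size_rename (t : Lam) (ρ : ℕ → ℕ) : (t.rename ρ).size = t.size := by
  induction t generalizing ρ with
  | var n => rfl
  | lam t ih => simp only [rename, size, ih]
  | app t u iht ihu => simp only [rename, size, iht, ihu]

theorem appList_append (t : Lam) (l l' : List Lam) :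
    t.appList (l ++ l') = (t.appList l).appList l' := by
  induction l generalizing t with
  | nil => rfl
  | cons a l ih => simp only [List.cons_append, appList, ih]

theorem appList_concat (t : Lam) (l : List Lam) (a : Lam) :
    t.appList (l ++ [a]) = .app (t.appList l) a :=
  appList_append t l [a]

theorem appList_rename (t : Lam) (l : List Lam) (ρ : ℕ → ℕ) :
    (t.appList l).rename ρ = (t.rename ρ).appList (l.map (rename · ρ)) := by
  induction l generalizing t with
  | nil => rfl
  | cons a l ih => simp only [appList, ih, List.map, rename]

theorem absN_rename (n : ℕ) (t : Lam) (ρ : ℕ → ℕ) :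
    (absN n t).rename ρ = absN n (t.rename (upRename^[n] ρ)) := by
  induction n generalizing ρ with
  | zero => rfl
  | succ n ih => simp only [absN, rename, ih, Function.iterate_succ_apply]

theorem appList_var_inj {y y' : ℕ} {l l' : List Lam}
    (h : (var y).appList l = (var y').appList l') : y = y' ∧ l = l' := by
  induction l using List.reverseRecOn generalizing l' with
  | nil =>
    cases l' using List.reverseRecOn with
    | nil => exact ⟨Lam.var.inj h, rfl⟩
    | append_singleton l' a' => simp [appList_concat, appList] at h
  | append_singleton l a ih =>
    cases l' using List.reverseRecOn with
    | nil => simp [appList_concat, appList] at h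
    | append_singleton l' a' =>
      rw [appList_concat, appList_concat, Lam.app.injEq] at h
      obtain ⟨rfl, rfl⟩ := ih h.1
      exact ⟨rfl, by rw [h.2]⟩

theorem appList_var_ne_lam (y : ℕ) (l : List Lam) (s : Lam) : (var y).appList l ≠ .lam s := by
  cases l using List.reverseRecOn with
  | nil => nofun
  | append_singleton l a => simp [appList_concat]

end Lam

/-! ### Head reduction and head normal forms -/

theorem LSpine.not_lam {s v : Lam} : ¬ LSpine LBetaRoot (.lam s) v := by
  rintro ⟨⟨⟩⟩

theorem LSpine.not_appList_var {y : ℕ} {l : List Lam} {v : Lam} :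
    ¬ LSpine LBetaRoot ((Lam.var y).appList l) v := by
  induction l using List.reverseRecOn generalizing v with
  | nil => rintro ⟨⟨⟩⟩
  | append_singleton l a ih =>
    rw [Lam.appList_concat]
    intro h
    generalize hs : (Lam.var y).appList l = s at h
    cases h with
    | root h =>
      cases h
      exact Lam.appList_var_ne_lam _ _ _ hs
    | appL _ h => exact ih (hs ▸ h)

theorem LSpine.det {t u v : Lam} (hu : LSpine LBetaRoot t u) (hv : LSpine LBetaRoot t v) :
    u = v := by
  induction hu generalizing v with
  | root h =>
    cases h
    cases hv with
    | root h => cases h; rfl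
    | appL _ h => exact (LSpine.not_lam h).elim
  | appL a h ih =>
    cases hv with
    | root hr => cases hr; exact (LSpine.not_lam h).elim
    | appL _ h' => rw [ih h']

theorem LHStep.det {t u v : Lam} (hu : LHStep t u) (hv : LHStep t v) : u = v := by
  induction hu generalizing v with
  | spine h =>
    cases hv with
    | spine h' => exact h.det h'
    | lam _ => exact (LSpine.not_lam h).elim
  | lam _ ih =>
    cases hv with
    | spine h' => exact (LSpine.not_lam h').elim
    | lam h' => rw [ih h']

theorem LSpine.rename {t u : Lam} (h : LSpine LBetaRoot t u) (ρ : ℕ → ℕ) :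
    LSpine LBetaRoot (t.rename ρ) (u.rename ρ) := by
  induction h with
  | root h =>
    obtain ⟨t, u⟩ := h
    rw [Lam.rename_subst]
    exact .root (.beta _ _)
  | appL a _ ih => exact .appL _ ih

theorem LHStep.rename {t u : Lam} (h : LHStep t u) (ρ : ℕ → ℕ) :
    LHStep (t.rename ρ) (u.rename ρ) := by
  induction h generalizing ρ with
  | spine h => exact .spine (h.rename ρ)
  | lam _ ih => exact .lam (ih _)

theorem LSpine.of_rename {t v : Lam} {ρ : ℕ → ℕ} (h : LSpine LBetaRoot (t.rename ρ) v) :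
    ∃ u, LSpine LBetaRoot t u ∧ v = u.rename ρ := by
  induction t generalizing v with
  | var n => obtain ⟨⟨⟩⟩ := h
  | lam t => exact (LSpine.not_lam h).elim
  | app t a ih =>
    generalize hs : t.rename ρ = s at ih
    rw [Lam.rename, hs] at h
    cases h with
    | root h =>
      obtain ⟨b, _⟩ := h
      cases t with
      | lam t =>
        obtain rfl := Lam.lam.inj hs
        exact ⟨_, .root (.beta _ _), (Lam.rename_subst t a ρ).symm⟩
      | var n => cases hs
      | app t u => cases hs
    | appL _ h =>
      obtain ⟨u, hu, rfl⟩ := ih h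
      exact ⟨_, .appL a hu, rfl⟩

theorem LHStep.of_rename {t v : Lam} {ρ : ℕ → ℕ} (h : LHStep (t.rename ρ) v) :
    ∃ u, LHStep t u ∧ v = u.rename ρ := by
  induction t generalizing v ρ with
  | lam t ih =>
    cases h with
    | spine h => exact (LSpine.not_lam h).elim
    | lam h =>
      obtain ⟨u, hu, rfl⟩ := ih h
      exact ⟨_, .lam hu, rfl⟩
  | var n | app t a =>
    cases h with
    | spine h =>
      obtain ⟨u, hu, rfl⟩ := LSpine.of_rename h
      exact ⟨u, .spine hu, rfl⟩

theorem LHSteps.rename {t u : Lam} (h : LHSteps t u) (ρ : ℕ → ℕ) :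
    LHSteps (t.rename ρ) (u.rename ρ) :=
  Relation.ReflTransGen.lift (Lam.rename · ρ) (fun _ _ h => LHStep.rename h ρ) _ _ h

theorem LHSteps.eq_of_lhnf {t u v : Lam} (hu : LHSteps t u) (hv : LHSteps t v) (nu : u.LHNF)
    (nv : v.LHNF) : u = v := by
  have det : Relator.RightUnique LHStep := fun _ _ _ => LHStep.det
  rcases Relation.ReflTransGen.total_of_right_unique det hu hv with h | h
  · exact h.cases_head.resolve_right fun ⟨w, hw, _⟩ => nu w hw
  · exact (h.cases_head.resolve_right fun ⟨w, hw, _⟩ => nv w hw).symm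

theorem Lam.HConv.of_rename {t : Lam} {ρ : ℕ → ℕ} (h : (t.rename ρ).HConv) : t.HConv := by
  obtain ⟨v, hv, nv⟩ := h
  generalize hs : t.rename ρ = s at hv
  induction hv using Relation.ReflTransGen.head_induction_on generalizing t with
  | refl =>
    subst hs
    exact ⟨t, .refl, fun u hu => nv _ (hu.rename ρ)⟩
  | head h _ ih =>
    subst hs
    obtain ⟨u, hu, rfl⟩ := LHStep.of_rename h
    obtain ⟨w, hw, nw⟩ := ih rfl
    exact ⟨w, .head hu hw, nw⟩

/-- The data of a head normal form `λx₁…xₙ. y t₁ … tₖ`. -/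
structure HeadForm where
  numAbs : ℕ
  head : ℕ
  args : List Lam

namespace HeadForm

/-- The head normal form itself. -/
def toLam (A : HeadForm) : Lam := .absN A.numAbs ((Lam.var A.head).appList A.args)

theorem lhnf (A : HeadForm) : A.toLam.LHNF := by
  obtain ⟨n, y, l⟩ := A
  induction n with
  | zero =>
    intro u h
    generalize hs : toLam _ = s at h
    cases h with
    | spine h => exact LSpine.not_appList_var (hs ▸ h)
    | lam h => exact Lam.appList_var_ne_lam _ _ _ hs
  | succ n ih =>
    rintro _ (h | h)
    · exact LSpine.not_lam h
    · exact ih _ h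

theorem toLam_injective : Function.Injective toLam := by
  rintro ⟨n, y, l⟩ ⟨n', y', l'⟩ h
  induction n generalizing n' with
  | zero =>
    cases n' with
    | zero => obtain ⟨rfl, rfl⟩ := Lam.appList_var_inj h; rfl
    | succ n' => exact (Lam.appList_var_ne_lam _ _ _ h).elim
  | succ n ih =>
    cases n' with
    | zero => exact (Lam.appList_var_ne_lam _ _ _ h.symm).elim
    | succ n' => cases ih _ (Lam.lam.inj h); rfl

/-- Renaming of the free variables. -/
def rename (A : HeadForm) (ρ : ℕ → ℕ) : HeadForm where
  numAbs := A.numAbs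
  head := Lam.upRename^[A.numAbs] ρ A.head
  args := A.args.map (Lam.rename · (Lam.upRename^[A.numAbs] ρ))

theorem toLam_rename (A : HeadForm) (ρ : ℕ → ℕ) : A.toLam.rename ρ = (A.rename ρ).toLam := by
  simp only [toLam, rename, Lam.absN_rename, Lam.appList_rename, Lam.rename]

end HeadForm

theorem LSpine.exists_or_eq (t : Lam) :
    (∃ u, LSpine LBetaRoot t u) ∨ (∃ s, t = .lam s) ∨ ∃ y l, t = (Lam.var y).appList l := by
  induction t with
  | var y => exact .inr (.inr ⟨y, [], rfl⟩)
  | lam s => exact .inr (.inl ⟨s, rfl⟩)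
  | app t a iht =>
    rcases iht with ⟨u, hu⟩ | ⟨s, rfl⟩ | ⟨y, l, rfl⟩
    · exact .inl ⟨_, .appL a hu⟩
    · exact .inl ⟨_, .root (.beta s a)⟩
    · exact .inr (.inr ⟨y, l ++ [a], (Lam.appList_concat _ l a).symm⟩)

theorem Lam.LHNF.exists_headForm {t : Lam} (ht : t.LHNF) : ∃ A : HeadForm, t = A.toLam := by
  induction t with
  | lam s ih =>
    obtain ⟨A, rfl⟩ := ih fun u hu => ht _ (.lam hu)
    exact ⟨⟨A.numAbs + 1, A.head, A.args⟩, rfl⟩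
  | var _ | app _ _ =>
    rcases LSpine.exists_or_eq _ with ⟨u, hu⟩ | ⟨s, hs⟩ | ⟨y, l, hl⟩
    · exact (ht u (.spine hu)).elim
    · cases hs
    · exact ⟨⟨0, y, l⟩, hl⟩

/-- `A` is the head normal form of `t`. -/
def HasHeadForm (t : Lam) (A : HeadForm) : Prop := LHSteps t A.toLam

namespace HasHeadForm

theorem unique {t : Lam} {A B : HeadForm} (hA : HasHeadForm t A) (hB : HasHeadForm t B) : A = B :=
  HeadForm.toLam_injective (hA.eq_of_lhnf hB A.lhnf B.lhnf)

theorem rename {t : Lam} {A : HeadForm} (h : HasHeadForm t A) (ρ : ℕ → ℕ) :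
    HasHeadForm (t.rename ρ) (A.rename ρ) :=
  (LHSteps.rename h ρ).trans (A.toLam_rename ρ ▸ .refl)

theorem hConv {t : Lam} {A : HeadForm} (h : HasHeadForm t A) : t.HConv := ⟨_, h, A.lhnf⟩

end HasHeadForm

theorem Lam.HConv.exists_hasHeadForm {t : Lam} (h : t.HConv) : ∃ A, HasHeadForm t A := by
  obtain ⟨_, hs, nh⟩ := h
  obtain ⟨A, rfl⟩ := nh.exists_headForm
  exact ⟨A, hs⟩

/-! ### Parallel η-reduction -/

theorem LEtaRoot.rename_succ (t : Lam) :
    LEtaRoot (.lam (.app (t.rename Nat.succ) (.var 0))) t :=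
  Lam.liftAt_zero t ▸ .eta t

namespace LEtaConv

theorem refl (t : Lam) : LEtaConv t t := Relation.ReflTransGen.refl

theorem trans {t u v : Lam} (h : LEtaConv t u) (h' : LEtaConv u v) : LEtaConv t v :=
  Relation.ReflTransGen.trans h h'

theorem symm {t u : Lam} (h : LEtaConv t u) : LEtaConv u t := by
  induction h with
  | refl => exact refl t
  | tail _ h ih => exact .head h.symm ih

theorem map {f : Lam → Lam} (hf : ∀ {a b}, LEta a b → LEta (f a) (f b)) {t u : Lam}
    (h : LEtaConv t u) : LEtaConv (f t) (f u) :=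
  Relation.ReflTransGen.lift f (fun _ _ => Or.imp hf hf) _ _ h

theorem lam {t u : Lam} (h : LEtaConv t u) : LEtaConv (.lam t) (.lam u) := h.map .lam

theorem app {t u t' u' : Lam} (ht : LEtaConv t t') (hu : LEtaConv u u') :
    LEtaConv (.app t u) (.app t' u') :=
  (ht.map (.appL u)).trans (hu.map (.appR t'))

theorem eta (t : Lam) : LEtaConv (.lam (.app (t.rename Nat.succ) (.var 0))) t :=
  .single (.inl (.root (.rename_succ t)))

theorem rename {t u : Lam} (h : LEtaConv t u) (ρ : ℕ → ℕ) :
    LEtaConv (t.rename ρ) (u.rename ρ) := by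
  refine h.map (f := (Lam.rename · ρ)) fun {a b} h => ?_
  induction h generalizing ρ with
  | root h =>
    cases h
    simp only [Lam.rename, Lam.liftAt_zero, Lam.rename_succ_rename_up]
    exact .root (.rename_succ _)
  | lam _ ih => exact .lam (ih _)
  | appL u _ ih => exact .appL _ (ih ρ)
  | appR t _ ih => exact .appR _ (ih ρ)

theorem absN {t u : Lam} (n : ℕ) (h : LEtaConv t u) : LEtaConv (.absN n t) (.absN n u) := by
  induction n with
  | zero => exact h
  | succ n ih => exact ih.lam

end LEtaConv

theorem LHStep.of_eta_expansion {u v : Lam}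
    (h : LHStep (.lam (.app (u.rename Nat.succ) (.var 0))) v) :
    v = u ∨ ∃ w, LSpine LBetaRoot u w ∧ v = .lam (.app (w.rename Nat.succ) (.var 0)) := by
  cases h with | spine h => exact (LSpine.not_lam h).elim | lam h => ?_
  cases h with | spine h => ?_
  generalize hs : u.rename Nat.succ = s at h
  cases h with
  | root hr =>
    obtain ⟨b, _⟩ := hr
    cases u with
    | var n => cases hs
    | app _ _ => cases hs
    | lam t =>
      obtain rfl := Lam.lam.inj hs
      exact .inl (congrArg Lam.lam t.rename_up_succ_subst_var)
  | appL _ h =>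
    obtain ⟨w, hw, rfl⟩ := LSpine.of_rename (hs ▸ h)
    exact .inr ⟨w, hw, rfl⟩

/-- Parallel η-reduction: `ParEta u t` contracts some of the η-redexes of `u`. -/
inductive ParEta : Lam → Lam → Prop
  | var (n : ℕ) : ParEta (.var n) (.var n)
  | lam {u t : Lam} : ParEta u t → ParEta (.lam u) (.lam t)
  | app {u t v s : Lam} : ParEta u t → ParEta v s → ParEta (.app u v) (.app t s)
  | eta {u t : Lam} : ParEta u t → ParEta (.lam (.app (u.rename Nat.succ) (.var 0))) t

namespace ParEta

theorem refl : ∀ t : Lam, ParEta t t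
  | .var n => .var n
  | .lam t => .lam (refl t)
  | .app t u => .app (refl t) (refl u)

theorem of_lEta {u t : Lam} (h : LEta u t) : ParEta u t := by
  induction h with
  | @root _ t h =>
    cases h
    exact Lam.liftAt_zero t ▸ .eta (refl t)
  | lam _ ih => exact .lam ih
  | appL u _ ih => exact .app ih (refl u)
  | appR t _ ih => exact .app (refl t) ih

theorem lEtaConv {u t : Lam} (h : ParEta u t) : LEtaConv u t := by
  induction h with
  | var n => exact .refl _
  | lam _ ih => exact ih.lam
  | app _ _ ih ih' => exact ih.app ih'
  | @eta u _ _ ih => exact (LEtaConv.eta u).trans ih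

theorem rename {u t : Lam} (h : ParEta u t) (ρ : ℕ → ℕ) : ParEta (u.rename ρ) (t.rename ρ) := by
  induction h generalizing ρ with
  | var n => exact .var _
  | lam _ ih => exact .lam (ih _)
  | app _ _ ih ih' => exact .app (ih ρ) (ih' ρ)
  | eta _ ih =>
    simp only [Lam.rename, Lam.rename_succ_rename_up]
    exact .eta (ih ρ)

theorem parSubst {u t : Lam} (h : ParEta u t) {σ τ : ℕ → Lam} (hσ : ∀ n, ParEta (σ n) (τ n)) :
    ParEta (u.parSubst σ) (t.parSubst τ) := by
  induction h generalizing σ τ with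
  | var n => exact hσ n
  | lam _ ih =>
    refine .lam (ih fun n => ?_)
    cases n with
    | zero => exact .var 0
    | succ n => exact (hσ n).rename _
  | app _ _ ih ih' => exact .app (ih hσ) (ih' hσ)
  | eta _ ih =>
    simp only [Lam.parSubst, Lam.rename_succ_parSubst_up]
    exact .eta (ih hσ)

theorem subst {u t v s : Lam} (h : ParEta u t) (h' : ParEta v s) :
    ParEta (u.subst 0 v) (t.subst 0 s) := by
  simp only [Lam.subst_eq_parSubst]
  refine h.parSubst fun n => ?_
  unfold Lam.single
  split_ifs
  exacts [h', .var _, .var _]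

theorem lSpine {u u' t : Lam} (h : ParEta u t) (hu : LSpine LBetaRoot u u') :
    (ParEta u' t ∧ u'.size < u.size) ∨ ∃ t', LSpine LBetaRoot t t' ∧ ParEta u' t' := by
  induction hu generalizing t with
  | root hr =>
    obtain ⟨b, a⟩ := hr
    cases h with | app hb ha => ?_
    cases hb with
    | lam hb => exact .inr ⟨_, .root (.beta _ _), hb.subst ha⟩
    | eta hb =>
      simp only [Lam.subst, Lam.rename_succ_subst, Lam.size, Lam.size_rename]
      exact .inl ⟨.app hb ha, by simp +arith⟩
  | appL a _ ih =>
    cases h with | app hu ha => ?_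
    rcases ih hu with ⟨h, hlt⟩ | ⟨t', ht, h⟩
    · exact .inl ⟨.app h ha, by simpa only [Lam.size, add_lt_add_iff_right]⟩
    · exact .inr ⟨_, .appL _ ht, .app h ha⟩

/-- A head step of an η-expansion is either simulated or administrative. Administrative steps
erase an η-redex, so they cannot be iterated forever. -/
theorem lHStep {u u' t : Lam} (h : ParEta u t) (hu : LHStep u u') :
    (ParEta u' t ∧ u'.size < u.size) ∨ ∃ t', LHStep t t' ∧ ParEta u' t' := by
  have of_spine {u u' t : Lam} (h : ParEta u t) (hu : LSpine LBetaRoot u u') :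
      (ParEta u' t ∧ u'.size < u.size) ∨ ∃ t', LHStep t t' ∧ ParEta u' t' :=
    (h.lSpine hu).imp_right fun ⟨t', ht, h'⟩ => ⟨t', .spine ht, h'⟩
  induction h generalizing u' with
  | var n => exact of_spine (.var n) (by cases hu; assumption)
  | app h h' => exact of_spine (.app h h') (by cases hu; assumption)
  | lam _ ih =>
    cases hu with
    | spine hu => exact (LSpine.not_lam hu).elim
    | lam hu =>
      rcases ih hu with ⟨h, hlt⟩ | ⟨t', ht, h⟩
      · exact .inl ⟨.lam h, by simpa only [Lam.size, add_lt_add_iff_right]⟩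
      · exact .inr ⟨_, .lam ht, .lam h⟩
  | @eta u t h ih =>
    rcases LHStep.of_eta_expansion hu with rfl | ⟨w, hw, rfl⟩
    · exact .inl ⟨h, by simp +arith only [Lam.size, Lam.size_rename]⟩
    · rcases ih (.spine hw) with ⟨h, hlt⟩ | ⟨t', ht, h⟩
      · refine .inl ⟨.eta h, ?_⟩
        simpa only [Lam.size, Lam.size_rename, add_lt_add_iff_right]
      · exact .inr ⟨t', ht, .eta h⟩

theorem lHSteps {u u' t : Lam} (h : ParEta u t) (hu : LHSteps u u') :
    ∃ t', LHSteps t t' ∧ ParEta u' t' := by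
  induction hu with
  | refl => exact ⟨t, .refl, h⟩
  | tail _ hu ih =>
    obtain ⟨t', ht, h'⟩ := ih
    rcases h'.lHStep hu with ⟨h', _⟩ | ⟨t'', ht', h''⟩
    · exact ⟨t', ht, h'⟩
    · exact ⟨t'', ht.tail ht', h''⟩

theorem hConv_or_exists_lHStep {u t : Lam} (h : ParEta u t) :
    u.HConv ∨ ∃ u' t', LHSteps u u' ∧ LHStep t t' ∧ ParEta u' t' := by
  induction hn : u.size using Nat.strong_induction_on generalizing u with | h n ih => ?_
  by_cases nu : u.LHNF
  · exact .inl ⟨u, .refl, nu⟩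
  obtain ⟨u', hu⟩ := not_forall_not.1 nu
  rcases h.lHStep hu with ⟨h', hlt⟩ | ⟨t', ht, h'⟩
  · rcases ih _ (hn ▸ hlt) h' rfl with ⟨v, hv, nv⟩ | ⟨v, t', hv, ht, h'⟩
    · exact .inl ⟨v, .head hu hv, nv⟩
    · exact .inr ⟨v, t', .head hu hv, ht, h'⟩
  · exact .inr ⟨u', t', .single hu, ht, h'⟩

theorem hConv {u t : Lam} (h : ParEta u t) (ht : t.HConv) : u.HConv := by
  obtain ⟨v, ht, nv⟩ := ht
  induction ht using Relation.ReflTransGen.head_induction_on generalizing u with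
  | refl => exact h.hConv_or_exists_lHStep.resolve_right fun ⟨_, t', _, ht, _⟩ => nv t' ht
  | head ht _ ih =>
    rcases h.hConv_or_exists_lHStep with hu | ⟨u', t', hu, ht', h'⟩
    · exact hu
    · obtain ⟨v, hv, nv⟩ := ih (ht'.det ht ▸ h')
      exact ⟨v, hu.trans hv, nv⟩

end ParEta

/-! ### η-conversion of head normal forms -/

theorem Lam.absN_lam (n : ℕ) (t : Lam) : absN n (.lam t) = absN (n + 1) t := by
  induction n with
  | zero => rfl
  | succ n ih => exact congrArg Lam.lam ih

theorem Lam.eq_appList_var_of_rename {u : Lam} {ρ : ℕ → ℕ} {y : ℕ} {l : List Lam}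
    (h : u.rename ρ = (var y).appList l) :
    ∃ x k, u = (var x).appList k ∧ y = ρ x ∧ l = k.map (rename · ρ) := by
  induction l using List.reverseRecOn generalizing u with
  | nil =>
    cases u with
    | var x => exact ⟨x, [], rfl, (Lam.var.inj h).symm, rfl⟩
    | lam _ => cases h
    | app _ _ => cases h
  | append_singleton l a ih =>
    rw [appList_concat] at h
    cases u with
    | var _ => cases h
    | lam _ => cases h
    | app s b =>
      obtain ⟨hs, rfl⟩ := Lam.app.inj h
      obtain ⟨x, k, rfl, rfl, rfl⟩ := ih hs
      exact ⟨x, k ++ [b], (appList_concat _ k b).symm, rfl, by simp⟩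

theorem forall₂_relComp {α β γ : Type*} {P : α → β → Prop} {Q : β → γ → Prop}
    {l : List α} {m : List β} {n : List γ} (h : List.Forall₂ P l m) (h' : List.Forall₂ Q m n) :
    List.Forall₂ (Relation.Comp P Q) l n := by
  induction h generalizing n with
  | nil => cases h'; exact .nil
  | cons hab _ ih => cases h' with | cons hbc h' => exact .cons ⟨_, hab, hbc⟩ (ih h')

namespace HeadForm

/-- The η-expansion `λx₁…xₙ x. y t₁ … tₖ x`. -/
def etaExpand (A : HeadForm) : HeadForm where
  numAbs := A.numAbs + 1
  head := A.head + 1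
  args := A.args.map (Lam.rename · Nat.succ) ++ [.var 0]

theorem numAbs_etaExpand_iterate (A : HeadForm) (i : ℕ) :
    (etaExpand^[i] A).numAbs = A.numAbs + i := by
  induction i with
  | zero => rfl
  | succ i ih => simp only [Function.iterate_succ_apply', etaExpand, ih, add_assoc]

theorem length_args_etaExpand_iterate (A : HeadForm) (i : ℕ) :
    (etaExpand^[i] A).args.length = A.args.length + i := by
  induction i with
  | zero => rfl
  | succ i ih => simp [Function.iterate_succ_apply', etaExpand, ih, add_assoc]

theorem lEtaConv_etaExpand_iterate (A : HeadForm) (i : ℕ) :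
    LEtaConv A.toLam (etaExpand^[i] A).toLam := by
  induction i generalizing A with
  | zero => exact .refl _
  | succ i ih =>
    refine .trans (.symm ?_) (ih A.etaExpand)
    simp only [toLam, etaExpand, ← Lam.absN_lam, Lam.appList_concat]
    exact (Lam.appList_rename (.var A.head) A.args Nat.succ ▸ LEtaConv.eta _).absN A.numAbs

theorem rename_etaExpand (A : HeadForm) (ρ : ℕ → ℕ) :
    A.etaExpand.rename ρ = (A.rename ρ).etaExpand := by
  simp [HeadForm.rename, etaExpand, Function.iterate_succ_apply', Lam.upRename, Lam.rename,
    Lam.rename_succ_rename_up]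

/-- Two head normal forms with the same binders, the same head variable and pointwise related
arguments. -/
structure Rel (P : Lam → Lam → Prop) (A B : HeadForm) : Prop where
  numAbs_eq : A.numAbs = B.numAbs
  head_eq : A.head = B.head
  args : List.Forall₂ P A.args B.args

/-- Two head normal forms that become related in the sense of `Rel` after η-expansions. -/
def EtaRel (P : Lam → Lam → Prop) (A B : HeadForm) : Prop :=
  ∃ i j, Rel P (etaExpand^[i] A) (etaExpand^[j] B)

variable {P Q S : Lam → Lam → Prop} {A B C : HeadForm}

theorem Rel.rename (h : Rel P A B) (hQ : ∀ {a b} ρ, P a b → Q (a.rename ρ) (b.rename ρ))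
    (ρ : ℕ → ℕ) : Rel Q (A.rename ρ) (B.rename ρ) := by
  obtain ⟨n, y, ts⟩ := A
  obtain ⟨n', y', us⟩ := B
  obtain ⟨rfl, rfl, h⟩ := h
  refine ⟨rfl, rfl, ?_⟩
  simp only [HeadForm.rename, List.forall₂_map_left_iff, List.forall₂_map_right_iff]
  exact h.imp fun _ _ => hQ _

theorem Rel.comp (h : Rel P A B) (h' : Rel Q B C) : Rel (Relation.Comp P Q) A C :=
  ⟨h.1.trans h'.1, h.2.trans h'.2, forall₂_relComp h.3 h'.3⟩

theorem Rel.mono (h : Rel P A B) (hPQ : ∀ {a b}, P a b → Q a b) : Rel Q A B :=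
  ⟨h.1, h.2, h.3.imp fun _ _ => hPQ⟩

theorem Rel.etaRel (h : Rel P A B) : EtaRel P A B := ⟨0, 0, h⟩

end HeadForm

/-- A relation on terms that relates each variable to itself and is closed under renaming. -/
structure RenameCongr (P : Lam → Lam → Prop) : Prop where
  var (n : ℕ) : P (.var n) (.var n)
  rename {t u : Lam} (h : P t u) (ρ : ℕ → ℕ) : P (t.rename ρ) (u.rename ρ)

theorem LEtaConv.renameCongr : RenameCongr LEtaConv where
  var _ := .refl _
  rename h := h.rename

theorem ParEta.renameCongr : RenameCongr ParEta where
  var := .var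
  rename h := h.rename

theorem RenameCongr.comp {P Q : Lam → Lam → Prop} (hP : RenameCongr P) (hQ : RenameCongr Q) :
    RenameCongr (Relation.Comp P Q) where
  var n := ⟨_, hP.var n, hQ.var n⟩
  rename := fun ⟨_, h, h'⟩ ρ => ⟨_, hP.rename h ρ, hQ.rename h' ρ⟩

namespace HeadForm

variable {P Q : Lam → Lam → Prop} {A B C : HeadForm}

theorem rel_etaExpand (hP : RenameCongr P) : Rel P A.etaExpand B.etaExpand ↔ Rel P A B := by
  constructor
  · rintro ⟨hn, hy, h⟩
    refine ⟨Nat.succ.inj hn, Nat.succ.inj hy, ?_⟩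
    have hlen : A.args.length = B.args.length := by simpa [etaExpand] using h.length_eq
    have := List.forall₂_take_append _ _ _ h
    simp only [List.length_map, ← hlen, List.take_left', List.forall₂_map_left_iff, etaExpand,
      List.forall₂_map_right_iff] at this
    exact this.imp fun a b hab => by
      simpa only [Lam.rename_succ_rename_pred] using hP.rename hab Nat.pred
  · rintro ⟨hn, hy, h⟩
    refine ⟨congrArg Nat.succ hn, congrArg Nat.succ hy, List.rel_append ?_ ?_⟩
    · simpa only [List.forall₂_map_left_iff, List.forall₂_map_right_iff]
        using h.imp fun _ _ hab => hP.rename hab _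
    · exact .cons (hP.var 0) .nil

theorem rel_etaExpand_iterate (hP : RenameCongr P) (i : ℕ) :
    Rel P (etaExpand^[i] A) (etaExpand^[i] B) ↔ Rel P A B := by
  induction i with
  | zero => rfl
  | succ i ih => simp only [Function.iterate_succ_apply', rel_etaExpand hP, ih]

namespace EtaRel

theorem symm (h : EtaRel P A B) (hPQ : ∀ {a b}, P a b → Q b a) : EtaRel Q B A := by
  obtain ⟨i, j, hn, hy, h⟩ := h
  exact ⟨j, i, hn.symm, hy.symm, List.Forall₂.flip (h.imp fun _ _ => hPQ)⟩

theorem comp (hP : RenameCongr P) (hQ : RenameCongr Q) (h : EtaRel P A B) (h' : EtaRel Q B C) :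
    EtaRel (Relation.Comp P Q) A C := by
  obtain ⟨i, j, h⟩ := h
  obtain ⟨i', j', h'⟩ := h'
  rw [← rel_etaExpand_iterate hP i', ← Function.iterate_add_apply,
    ← Function.iterate_add_apply] at h
  rw [← rel_etaExpand_iterate hQ j, ← Function.iterate_add_apply,
    ← Function.iterate_add_apply, add_comm j] at h'
  exact ⟨_, _, h.comp h'⟩

theorem mono (h : EtaRel P A B) (hPQ : ∀ {a b}, P a b → Q a b) : EtaRel Q A B :=
  let ⟨i, j, h⟩ := h
  ⟨i, j, h.mono hPQ⟩

theorem numAbs_add_length (h : EtaRel P A B) :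
    A.numAbs + B.args.length = B.numAbs + A.args.length := by
  obtain ⟨i, j, h⟩ := h
  have hn := h.numAbs_eq
  have hl := h.args.length_eq
  simp only [numAbs_etaExpand_iterate, length_args_etaExpand_iterate] at hn hl
  omega

theorem rel (hP : RenameCongr P) (h : EtaRel P A B) (hn : A.numAbs = B.numAbs) : Rel P A B := by
  obtain ⟨i, j, h⟩ := h
  have hij := h.numAbs_eq
  simp only [numAbs_etaExpand_iterate, hn, add_right_inj] at hij
  rwa [hij, rel_etaExpand_iterate hP] at h

theorem rename (hP : RenameCongr P) (h : EtaRel P A B) (ρ : ℕ → ℕ) :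
    EtaRel P (A.rename ρ) (B.rename ρ) := by
  have comm (i : ℕ) (A : HeadForm) : etaExpand^[i] (A.rename ρ) = (etaExpand^[i] A).rename ρ :=
    (Function.Commute.iterate_left (f := etaExpand) (g := (HeadForm.rename · ρ))
      (fun A => (A.rename_etaExpand ρ).symm) i).eq A
  obtain ⟨i, j, h⟩ := h
  exact ⟨i, j, by rw [comm, comm]; exact h.rename (fun ρ h => hP.rename h ρ) ρ⟩

end EtaRel

/-- One more abstraction in front. -/
def lam (A : HeadForm) : HeadForm := { A with numAbs := A.numAbs + 1 }

theorem EtaRel.lam (h : EtaRel P A B) : EtaRel P A.lam B.lam := by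
  have comm (i : ℕ) (A : HeadForm) : etaExpand^[i] A.lam = (etaExpand^[i] A).lam :=
    (Function.Commute.iterate_left (f := etaExpand) (g := HeadForm.lam) (fun _ => rfl) i).eq A
  obtain ⟨i, j, hn, hy, h⟩ := h
  refine ⟨i, j, ?_⟩
  rw [comm, comm]
  exact ⟨congrArg Nat.succ hn, hy, h⟩

end HeadForm

theorem ParEta.exists_eq_appList_var {y : ℕ} {ts : List Lam} {t : Lam}
    (h : ParEta ((Lam.var y).appList ts) t) :
    ∃ us, t = (Lam.var y).appList us ∧ List.Forall₂ ParEta ts us := by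
  induction ts using List.reverseRecOn generalizing t with
  | nil =>
    cases h
    exact ⟨[], rfl, .nil⟩
  | append_singleton ts a ih =>
    rw [Lam.appList_concat] at h
    cases h with
    | @app _ _ _ b h hb =>
      obtain ⟨us, rfl, hus⟩ := ih h
      exact ⟨us ++ [b], (Lam.appList_concat _ us b).symm, List.rel_append hus (.cons hb .nil)⟩

theorem HeadForm.eq_etaExpand_of_toLam_eq {A : HeadForm} {u : Lam}
    (h : A.toLam = .lam (.app (u.rename Nat.succ) (.var 0))) :
    ∃ y ts, u = (Lam.var y).appList ts ∧ A = etaExpand ⟨0, y, ts⟩ := by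
  obtain ⟨n, y, l⟩ := A
  rcases n with _ | _ | n
  · exact (Lam.appList_var_ne_lam _ _ _ h).elim
  · replace h := Lam.lam.inj h
    cases l using List.reverseRecOn with
    | nil => cases h
    | append_singleton l a =>
      change (Lam.var y).appList (l ++ [a]) = _ at h
      rw [Lam.appList_concat] at h
      obtain ⟨hu, rfl⟩ := Lam.app.inj h
      obtain ⟨x, k, rfl, rfl, rfl⟩ := Lam.eq_appList_var_of_rename hu.symm
      exact ⟨x, k, rfl, rfl⟩
  · cases h

theorem ParEta.exists_eq_toLam {A : HeadForm} {t : Lam} (h : ParEta A.toLam t) :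
    ∃ B : HeadForm, t = B.toLam ∧ A.EtaRel ParEta B := by
  obtain ⟨n, y, ts⟩ := A
  induction n generalizing t with
  | zero =>
    obtain ⟨us, rfl, hus⟩ := ParEta.exists_eq_appList_var h
    exact ⟨⟨0, y, us⟩, rfl, 0, 0, rfl, rfl, hus⟩
  | succ n ih =>
    generalize hs : (⟨n + 1, y, ts⟩ : HeadForm).toLam = s at h
    cases h with
    | var _ => cases hs
    | app _ _ => cases hs
    | lam h =>
      obtain ⟨B, rfl, hB⟩ := ih (Lam.lam.inj hs ▸ h)
      exact ⟨B.lam, rfl, hB.lam⟩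
    | eta h =>
      obtain ⟨x, us, rfl, hA⟩ := HeadForm.eq_etaExpand_of_toLam_eq hs
      obtain ⟨vs, rfl, hvs⟩ := ParEta.exists_eq_appList_var h
      refine ⟨⟨0, x, vs⟩, rfl, 0, 1, ?_⟩
      simpa only [hA, Function.iterate_zero_apply, Function.iterate_one,
        HeadForm.rel_etaExpand ParEta.renameCongr] using .mk rfl rfl hvs

theorem LEtaConv.exists_hasHeadForm {t u : Lam} {A : HeadForm} (h : LEtaConv t u)
    (hA : HasHeadForm t A) : ∃ B, HasHeadForm u B ∧ A.EtaRel LEtaConv B := by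
  have forward {t u : Lam} {A : HeadForm} (h : ParEta t u) (hA : HasHeadForm t A) :
      ∃ B, HasHeadForm u B ∧ A.EtaRel LEtaConv B := by
    obtain ⟨u', hu, h⟩ := h.lHSteps hA
    obtain ⟨B, rfl, hB⟩ := h.exists_eq_toLam
    exact ⟨B, hu, hB.mono ParEta.lEtaConv⟩
  have backward {t u : Lam} {A : HeadForm} (h : ParEta u t) (hA : HasHeadForm t A) :
      ∃ B, HasHeadForm u B ∧ A.EtaRel LEtaConv B := by
    obtain ⟨B, hB⟩ := (h.hConv hA.hConv).exists_hasHeadForm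
    obtain ⟨A', hA', hBA⟩ := forward h hB
    exact ⟨B, hB, hA'.unique hA ▸ hBA.symm .symm⟩
  induction h with
  | refl => exact ⟨A, hA, 0, 0, rfl, rfl, List.forall₂_same.2 fun a _ => .refl a⟩
  | tail _ hstep ih =>
    obtain ⟨B, hB, hAB⟩ := ih
    obtain ⟨C, hC, hBC⟩ := hstep.elim (fun h => forward (.of_lEta h) hB)
      (fun h => backward (.of_lEta h) hB)
    exact ⟨C, hC, (hAB.comp renameCongr renameCongr hBC).mono fun ⟨_, h₁, h₂⟩ => h₁.trans h₂⟩

/-! ### Böhm preorders in terms of head normal forms -/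

theorem BohmClause.of_rel {R : Lam → Lam → Prop} {t u : Lam} {A B : HeadForm}
    (hA : HasHeadForm t A) (hB : HasHeadForm u B) (h : A.Rel R B) : BohmClause R t u := by
  obtain ⟨n, y, ts⟩ := A
  obtain ⟨n', y', us⟩ := B
  obtain ⟨rfl, rfl, h⟩ := h
  obtain ⟨hlen, hR⟩ := List.forall₂_iff_get.1 h
  exact .inr ⟨n, y, ts, us, hlen, hA, hB, hR⟩

theorem BohmEtaClause.of_etaRel {R : Lam → Lam → Prop} {t u : Lam} {A B : HeadForm}
    (hA : HasHeadForm t A) (hB : HasHeadForm u B) (h : A.EtaRel R B) : BohmEtaClause R t u := by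
  obtain ⟨i, j, hn, hy, h⟩ := h
  obtain ⟨hlen, hR⟩ := List.forall₂_iff_get.1 h
  refine .inr ⟨_, _, _, _, _, _, hlen, hA, A.lhnf, A.lEtaConv_etaExpand_iterate i, hB, B.lhnf,
    ?_, hR⟩
  rw [hn, hy]
  exact B.lEtaConv_etaExpand_iterate j

theorem BohmEtaClause.mono {P Q : Lam → Lam → Prop} (hPQ : ∀ {a b}, P a b → Q a b) {t u : Lam}
    (h : BohmEtaClause P t u) : BohmEtaClause Q t u := by
  refine h.imp_right ?_
  rintro ⟨n, y, ts, us, h, h', hlen, ht, nh, hη, hu, nh', hη', hP⟩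
  exact ⟨n, y, ts, us, h, h', hlen, ht, nh, hη, hu, nh', hη', fun i hi hj => hPQ (hP i hi hj)⟩

theorem BohmEtaLe.clause {t u : Lam} (h : BohmEtaLe t u) : BohmEtaClause BohmEtaLe t u :=
  let ⟨R, hR, h⟩ := h
  (hR t u h).mono fun h => ⟨R, hR, h⟩

/-- The closure of a relation under η-conversion on both sides. -/
def EtaClosure (P : Lam → Lam → Prop) (a b : Lam) : Prop :=
  ∃ t u, LEtaConv a t ∧ P t u ∧ LEtaConv u b

theorem EtaClosure.lEtaConv_trans {P : Lam → Lam → Prop} {a a' b b' : Lam} (ha : LEtaConv a a')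
    (h : EtaClosure P a' b') (hb : LEtaConv b' b) : EtaClosure P a b :=
  let ⟨t, u, ht, h, hu⟩ := h
  ⟨t, u, ha.trans ht, h, hu.trans hb⟩

theorem EtaClosure.renameCongr {P : Lam → Lam → Prop} (hP : RenameCongr P) :
    RenameCongr (EtaClosure P) where
  var n := ⟨_, _, .refl _, hP.var n, .refl _⟩
  rename := fun ⟨_, _, ht, h, hu⟩ ρ => ⟨_, _, ht.rename ρ, hP.rename h ρ, hu.rename ρ⟩

theorem HeadForm.EtaRel.etaClosure {P : Lam → Lam → Prop} (hP : RenameCongr P)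
    {A B C D : HeadForm} (hAC : A.EtaRel LEtaConv C) (hCD : C.EtaRel P D)
    (hDB : D.EtaRel LEtaConv B) : A.EtaRel (EtaClosure P) B :=
  (hAC.comp LEtaConv.renameCongr (hP.comp LEtaConv.renameCongr)
    (hCD.comp hP LEtaConv.renameCongr hDB)).mono
      fun ⟨t, ht, u, h, hu⟩ => ⟨t, u, ht, h, hu⟩

theorem BohmEtaClause.exists_etaRel {P : Lam → Lam → Prop} (hP : RenameCongr P) {t u : Lam}
    (h : BohmEtaClause P t u) {A : HeadForm} (hA : HasHeadForm t A) :
    ∃ B, HasHeadForm u B ∧ A.EtaRel (EtaClosure P) B := by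
  obtain ⟨n, y, ts, us, a, b, hlen, ha, na, hη, hb, nb, hη', hR⟩ :=
    h.resolve_left (not_not_intro hA.hConv)
  obtain rfl : a = A.toLam := ha.eq_of_lhnf hA na A.lhnf
  obtain ⟨B, rfl⟩ := nb.exists_headForm
  let C : HeadForm := ⟨n, y, ts⟩
  let D : HeadForm := ⟨n, y, us⟩
  have hCD : C.Rel P D := ⟨rfl, rfl, List.forall₂_iff_get.2 ⟨hlen, hR⟩⟩
  obtain ⟨C', hC, hAC⟩ := hη.exists_hasHeadForm (A := A) .refl
  obtain ⟨D', hD, hBD⟩ := hη'.exists_hasHeadForm (A := B) .refl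
  obtain rfl : C = C' := HasHeadForm.unique .refl hC
  obtain rfl : D = D' := HasHeadForm.unique .refl hD
  exact ⟨B, hb, hAC.etaClosure hP hCD.etaRel (hBD.symm .symm)⟩

/-- The closure of a relation under renamings of the free variables. -/
def RenameClosure (P : Lam → Lam → Prop) (a b : Lam) : Prop :=
  ∃ ρ t u, P t u ∧ a = t.rename ρ ∧ b = u.rename ρ

theorem RenameClosure.of {P : Lam → Lam → Prop} {a b : Lam} (h : P a b) : RenameClosure P a b :=
  ⟨id, a, b, h, a.rename_id.symm, b.rename_id.symm⟩

namespace BohmEtaLe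

theorem var (n : ℕ) : BohmEtaLe (.var n) (.var n) := by
  refine ⟨fun a b => a = .var n ∧ b = .var n, ?_, rfl, rfl⟩
  rintro _ _ ⟨rfl, rfl⟩
  have hn : HasHeadForm (.var n) ⟨0, n, []⟩ := .refl
  exact .of_etaRel hn hn ⟨0, 0, rfl, rfl, .nil⟩

theorem renameClosure_renameCongr : RenameCongr (RenameClosure BohmEtaLe) where
  var n := .of (var n)
  rename := by
    rintro _ _ ⟨ρ, t, u, h, rfl, rfl⟩ ρ'
    exact ⟨ρ' ∘ ρ, t, u, h, t.rename_rename ρ ρ', u.rename_rename ρ ρ'⟩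

theorem of_etaClosure {a b : Lam} (h : EtaClosure (RenameClosure BohmEtaLe) a b) :
    BohmEtaLe a b := by
  refine ⟨_, ?_, h⟩
  rintro a b ⟨_, _, ha, ⟨ρ, t, u, h, rfl, rfl⟩, hb⟩
  by_cases ca : a.HConv
  · obtain ⟨A, hA⟩ := ca.exists_hasHeadForm
    obtain ⟨T', hT', hAT⟩ := ha.exists_hasHeadForm hA
    obtain ⟨T, hT⟩ := hT'.hConv.of_rename.exists_hasHeadForm
    obtain ⟨U, hU, hTU⟩ := (h.clause.mono .of).exists_etaRel renameClosure_renameCongr hT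
    obtain ⟨B, hB, hUB⟩ := hb.exists_hasHeadForm (hU.rename ρ)
    obtain rfl := hT'.unique (hT.rename ρ)
    have hcongr := EtaClosure.renameCongr renameClosure_renameCongr
    exact .of_etaRel hA hB <| (hAT.etaClosure hcongr (hTU.rename hcongr ρ) hUB).mono
      fun ⟨_, _, h, h', h''⟩ => h'.lEtaConv_trans h h''
  · exact .inl ca

theorem renameCongr : RenameCongr BohmEtaLe where
  var := var
  rename {t u} h ρ := of_etaClosure ⟨_, _, .refl _, ⟨ρ, t, u, h, rfl, rfl⟩, .refl _⟩

theorem exists_etaRel {t u : Lam} (h : BohmEtaLe t u) {A : HeadForm} (hA : HasHeadForm t A) :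
    ∃ B, HasHeadForm u B ∧ A.EtaRel BohmEtaLe B := by
  obtain ⟨B, hB, hAB⟩ := h.clause.exists_etaRel renameCongr hA
  exact ⟨B, hB, hAB.mono fun ⟨t, u, ht, h, hu⟩ => of_etaClosure ⟨t, u, ht, .of h, hu⟩⟩

end BohmEtaLe

/-! ### Checkers terms and their spine reductions -/

namespace CTerm

/-- `n` abstractions by player `p` in front of a term. -/
def absN (p : Player) : ℕ → CTerm → CTerm
  | 0, t => t
  | n + 1, t => .lam p (absN p n t)

/-- Left-nested application, by player `p`, of a term to a list of arguments. -/
def appList (p : Player) : CTerm → List CTerm → CTerm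
  | t, [] => t
  | t, u :: us => appList p (.app p t u) us

theorem appList_append (p : Player) (t : CTerm) (l l' : List CTerm) :
    appList p t (l ++ l') = appList p (appList p t l) l' := by
  induction l generalizing t with
  | nil => rfl
  | cons a l ih => simp only [List.cons_append, appList, ih]

/-- All free de Bruijn indices are below `d`; in particular `ClosedAt t 0` says that `t` is
closed. -/
def ClosedAt : CTerm → ℕ → Prop
  | .var n, d => n < d
  | .lam _ t, d => t.ClosedAt (d + 1)
  | .app _ t u, d => t.ClosedAt d ∧ u.ClosedAt d

namespace ClosedAt

theorem mono {t : CTerm} {d e : ℕ} (h : t.ClosedAt d) (hde : d ≤ e) : t.ClosedAt e := by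
  induction t generalizing d e with
  | var n => exact lt_of_lt_of_le h hde
  | lam p t ih => exact ih h (Nat.succ_le_succ hde)
  | app p t u iht ihu => exact ⟨iht h.1 hde, ihu h.2 hde⟩

theorem liftAt_eq {t : CTerm} {d e : ℕ} (h : t.ClosedAt d) (hde : d ≤ e) : t.liftAt e = t := by
  induction t generalizing d e with
  | var n => rw [liftAt, if_pos (lt_of_lt_of_le h hde)]
  | lam p t ih => rw [liftAt, ih h (Nat.succ_le_succ hde)]
  | app p t u iht ihu => rw [liftAt, iht h.1 hde, ihu h.2 hde]

theorem subst_eq {t : CTerm} {d x : ℕ} (h : t.ClosedAt d) (hdx : d ≤ x) (a : CTerm) :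
    t.subst x a = t := by
  induction t generalizing d x a with
  | var n =>
    have hn : n < x := lt_of_lt_of_le h hdx
    rw [subst, if_neg hn.ne, if_neg hn.not_gt]
  | lam p t ih => rw [subst, ih h (Nat.succ_le_succ hdx)]
  | app p t u iht ihu => rw [subst, iht h.1 hdx, ihu h.2 hdx]

theorem map_subst_eq {l : List CTerm} {d x : ℕ} (h : ∀ a ∈ l, a.ClosedAt d) (hdx : d ≤ x)
    (a : CTerm) : l.map (fun b => b.subst x a) = l :=
  (List.map_congr_left fun b hb => (h b hb).subst_eq hdx a).trans (List.map_id l)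

theorem absN {p : Player} {n d : ℕ} {t : CTerm} (h : t.ClosedAt (d + n)) :
    (absN p n t).ClosedAt d := by
  induction n generalizing d with
  | zero => exact h
  | succ n ih => exact ih (h.mono (by omega))

theorem appList {p : Player} {d : ℕ} {t : CTerm} {l : List CTerm} (h : t.ClosedAt d)
    (hl : ∀ a ∈ l, a.ClosedAt d) : (appList p t l).ClosedAt d := by
  induction l generalizing t with
  | nil => exact h
  | cons a l ih =>
    rw [List.forall_mem_cons] at hl
    exact ih ⟨h, hl.1⟩ hl.2

end ClosedAt

theorem absN_subst (p : Player) (n x : ℕ) (t : CTerm) {a : CTerm} (ha : a.ClosedAt 0) :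
    (absN p n t).subst x a = absN p n (t.subst (x + n) a) := by
  induction n generalizing x with
  | zero => rfl
  | succ n ih => rw [absN, subst, ha.liftAt_eq le_rfl, ih, Nat.add_right_comm, absN]; rfl

theorem appList_subst (p : Player) (t : CTerm) (l : List CTerm) (x : ℕ) (a : CTerm) :
    (appList p t l).subst x a = appList p (t.subst x a) (l.map fun b => b.subst x a) := by
  induction l generalizing t with
  | nil => rfl
  | cons b l ih => simp only [appList, List.map, ih, subst]

theorem untag_absN (p : Player) (n : ℕ) (t : CTerm) :
    (absN p n t).untag = .absN n t.untag := by
  induction n with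
  | zero => rfl
  | succ n ih => rw [absN, untag, ih, Lam.absN]

theorem untag_appList (p : Player) (t : CTerm) (l : List CTerm) :
    (appList p t l).untag = t.untag.appList (l.map untag) := by
  induction l generalizing t with
  | nil => rfl
  | cons a l ih => rw [appList, ih, untag, List.map, Lam.appList]

/-- Untagging turns a checkers head redex, silent or not, into a head redex. -/
theorem HNF.of_untag {t : CTerm} (ht : t.untag.LHNF) : t.HNF := by
  have spine {R : CTerm → CTerm → Prop} (hR : ∀ {a b}, R a b → ∃ v, LBetaRoot a.untag v)
      {a b : CTerm} (h : CSpine R a b) : ∃ v, LSpine LBetaRoot a.untag v := by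
    induction h with
    | root h => exact (hR h).imp fun _ => .root
    | appL _ c _ ih => exact ih.elim fun _ hv => ⟨_, .appL c.untag hv⟩
  have head {R : CTerm → CTerm → Prop} (hR : ∀ {a b}, R a b → ∃ v, LBetaRoot a.untag v)
      {a b : CTerm} (h : CHead R a b) : ∃ v, LHStep a.untag v := by
    induction h with
    | spine h => exact (spine hR h).imp fun _ => .spine
    | lam _ _ ih => exact ih.elim fun _ hv => ⟨_, .lam hv⟩
  rintro u (h | h)
  · obtain ⟨v, hv⟩ := head (by rintro _ _ ⟨⟩; exact ⟨_, .beta _ _⟩) h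
    exact ht v hv
  · obtain ⟨v, hv⟩ := head (by rintro _ _ ⟨⟩; exact ⟨_, .beta _ _⟩) h
    exact ht v hv

end CTerm

theorem Lam.tag_absN (p : Player) (n : ℕ) (t : Lam) :
    (absN n t).tag p = CTerm.absN p n (t.tag p) := by
  induction n with
  | zero => rfl
  | succ n ih => rw [absN, tag, ih, CTerm.absN]

theorem Lam.tag_appList (p : Player) (t : Lam) (l : List Lam) :
    (t.appList l).tag p = CTerm.appList p (t.tag p) (l.map (tag · p)) := by
  induction l generalizing t with
  | nil => rfl
  | cons a l ih => rw [appList, ih, tag, List.map, CTerm.appList]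

/-- `SpineRun t k u`: a checkers reduction sequence from `t` to `u` that contracts only redexes in
spine position (hence may be performed under further arguments), with exactly `k` interaction
steps. -/
inductive SpineRun : CTerm → ℕ → CTerm → Prop
  | refl (t : CTerm) : SpineRun t 0 t
  | silent {t u v : CTerm} {k : ℕ} : CSpine SilentRoot t u → SpineRun u k v → SpineRun t k v
  | inter {t u v : CTerm} {k : ℕ} : CSpine InterRoot t u → SpineRun u k v → SpineRun t (k + 1) v

namespace SpineRun

open CTerm

theorem trans {t u v : CTerm} {k l : ℕ} (h : SpineRun t k u) (h' : SpineRun u l v) :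
    SpineRun t (k + l) v := by
  induction h with
  | refl => rwa [Nat.zero_add]
  | silent h _ ih => exact .silent h (ih h')
  | inter h _ ih =>
    rw [Nat.add_right_comm]
    exact .inter h (ih h')

theorem app {t u : CTerm} {k : ℕ} (h : SpineRun t k u) (p : Player) (a : CTerm) :
    SpineRun (.app p t a) k (.app p u a) := by
  induction h with
  | refl => exact .refl _
  | silent h _ ih => exact .silent (.appL _ _ h) ih
  | inter h _ ih => exact .inter (.appL _ _ h) ih

theorem appList {t u : CTerm} {k : ℕ} (h : SpineRun t k u) (p : Player) (l : List CTerm) :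
    SpineRun (appList p t l) k (appList p u l) := by
  induction l generalizing t u with
  | nil => exact h
  | cons a _ ih => exact ih (h.app p a)

theorem bigStep {t u : CTerm} {k l : ℕ} (h : SpineRun t k u) (h' : BigStep u l) :
    BigStep t (k + l) := by
  induction h with
  | refl => rwa [Nat.zero_add]
  | silent h _ ih => exact .silent (.spine h) (ih h')
  | inter h _ ih =>
    rw [Nat.add_right_comm]
    exact .inter (.spine h) (ih h')

theorem beta (p q : Player) (t u : CTerm) :
    SpineRun (.app q (.lam p t) u) (p.gamma q) (t.subst 0 u) := by
  cases p <;> cases q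
  · exact .silent (.root (.beta _ _ _)) (.refl _)
  · exact .inter (.root (.beta .white _ _)) (.refl _)
  · exact .inter (.root (.beta .black _ _)) (.refl _)
  · exact .silent (.root (.beta _ _ _)) (.refl _)

theorem beta_self (p : Player) (t u : CTerm) : SpineRun (.app p (.lam p t) u) 0 (t.subst 0 u) :=
  .silent (.root (.beta _ _ _)) (.refl _)

theorem discard (p : Player) (l : List CTerm) {a : CTerm} (ha : a.ClosedAt 0) :
    SpineRun (CTerm.appList p (absN p l.length a) l) 0 a := by
  induction l with
  | nil => exact .refl _
  | cons b l ih =>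
    have h := beta_self p (absN p l.length a) b
    rw [(ClosedAt.absN (ha.mono (Nat.zero_le _))).subst_eq le_rfl] at h
    exact (h.appList p l).trans ih

end SpineRun

/-! ### Tuples and selectors -/

/-- The tupling combinator `λx₁…x_K. λs. s x₁ … x_K`. -/
def Lam.tuple (K : ℕ) : Lam :=
  absN (K + 1) ((var 0).appList ((List.range K).reverse.map fun i => .var (i + 1)))

/-- The selector `λx₁…xᵢ. λx. λy₁…y_K. x` of the `i`-th among `i + 1 + K` arguments. -/
def Lam.selector (i K : ℕ) : Lam := absN i (absN (K + 1) (var K))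

namespace CTerm

/-- The white term `λx₁…xⱼ. λs. s a₁ … aₖ x₁ … xⱼ`, for a list `a₁ … aₖ` of closed terms: the
tupling combinator of size `k + j` after it has received `k` arguments. -/
def partialTuple (j : ℕ) (as : List CTerm) : CTerm :=
  absN .white (j + 1)
    (appList .white (.var 0) (as ++ (List.range j).reverse.map fun i => .var (i + 1)))

theorem tag_tuple (K : ℕ) : (Lam.tuple K).tag .white = partialTuple K [] := by
  rw [Lam.tuple, Lam.tag_absN, Lam.tag_appList, List.map_map]
  rfl

theorem closedAt_tag_tuple (K : ℕ) : ((Lam.tuple K).tag .white).ClosedAt 0 := by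
  rw [tag_tuple]
  refine .absN (.appList (Nat.succ_pos _) ?_)
  simp only [List.nil_append, List.forall_mem_map, List.mem_reverse, List.mem_range, ClosedAt]
  omega

theorem partialTuple_hnf (j : ℕ) (as : List CTerm) : (partialTuple j as).HNF := by
  apply HNF.of_untag
  rw [partialTuple, untag_absN, untag_appList]
  exact HeadForm.lhnf ⟨_, 0, _⟩

end CTerm

namespace SpineRun

open CTerm

theorem partialTuple_app (q : Player) (j : ℕ) {as : List CTerm} {a : CTerm}
    (has : ∀ b ∈ as, b.ClosedAt 0) (ha : a.ClosedAt 0) :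
    SpineRun (.app q (partialTuple (j + 1) as) a) (Player.gamma .white q)
      (partialTuple j (as ++ [a])) := by
  have hsubst : (absN .white (j + 1) (CTerm.appList .white (.var 0)
      (as ++ (List.range (j + 1)).reverse.map fun i => .var (i + 1)))).subst 0 a
        = partialTuple j (as ++ [a]) := by
    have hvars := ClosedAt.map_subst_eq
      (l := (List.range j).reverse.map fun i => .var (i + 1)) (d := j + 1) (x := j + 1)
      (by simp [ClosedAt]) le_rfl a
    rw [absN_subst _ _ _ _ ha, appList_subst, List.map_append,
      ClosedAt.map_subst_eq has (Nat.zero_le _), List.range_succ, List.reverse_append,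
      List.reverse_singleton, List.singleton_append, List.map_cons, List.map_cons, Nat.zero_add,
      hvars, subst, if_neg (Nat.succ_ne_zero j).symm, if_neg (Nat.not_lt_zero _), subst, if_pos rfl,
      partialTuple, List.append_assoc, List.singleton_append]
  rw [← hsubst]
  exact beta .white q _ a

theorem partialTuple_appList (q : Player) (j : ℕ) {as l : List CTerm}
    (has : ∀ b ∈ as, b.ClosedAt 0) (hl : ∀ b ∈ l, b.ClosedAt 0) :
    SpineRun (CTerm.appList q (partialTuple (l.length + j) as) l)
      (l.length * Player.gamma .white q) (partialTuple j (as ++ l)) := by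
  induction l generalizing as with
  | nil => simpa [CTerm.appList] using SpineRun.refl _
  | cons a l ih =>
    rw [List.forall_mem_cons] at hl
    have first := partialTuple_app q (l.length + j) has hl.1
    have rest := ih (as := as ++ [a]) (by simpa [or_imp, forall_and] using ⟨has, hl.1⟩) hl.2
    convert (first.appList q l).trans rest using 1
    · rw [List.length_cons, Nat.add_right_comm, CTerm.appList]
    · rw [List.length_cons, Nat.succ_mul, Nat.add_comm]
    · rw [List.append_assoc, List.singleton_append]

theorem selector_appList (l l' : List CTerm) {a : CTerm} (ha : a.ClosedAt 0) :
    SpineRun (CTerm.appList .white ((Lam.selector l.length l'.length).tag .white) (l ++ a :: l'))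
      0 a := by
  have body : (CTerm.absN .white (l'.length + 1) (.var l'.length)).ClosedAt 0 :=
    .absN (by simp [ClosedAt])
  rw [Lam.selector, Lam.tag_absN, Lam.tag_absN, CTerm.appList_append]
  have keep := beta_self .white (absN .white l'.length (.var l'.length)) a
  rw [absN_subst _ _ _ _ ha, subst, if_pos (Nat.zero_add _).symm] at keep
  exact ((discard .white l body).appList .white (a :: l')).trans
    ((keep.appList .white l').trans (discard .white l' ha))

theorem partialTuple_app_selector {l : List CTerm} (hl : ∀ a ∈ l, a.ClosedAt 0) {i K : ℕ}
    (hi : i < l.length) (hK : l.length = i + 1 + K) :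
    SpineRun (.app .white (partialTuple 0 l) ((Lam.selector i K).tag .white)) 0 l[i] := by
  have expose := beta_self .white (CTerm.appList .white (.var 0) l) ((Lam.selector i K).tag .white)
  rw [appList_subst, ClosedAt.map_subst_eq hl le_rfl, subst, if_pos rfl] at expose
  have select := selector_appList (l.take i) (l.drop (i + 1)) (hl _ (List.getElem_mem hi))
  rw [List.getElem_cons_drop, List.take_append_drop, List.length_take_of_le hi.le, List.length_drop,
    hK, Nat.add_sub_cancel_left] at select
  convert expose.trans select using 2
  simp [partialTuple, absN]

end SpineRun

/-! ### Closing a term with copies of a closed term -/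

namespace Lam

/-- The term tagged by player `p`, with a closed checkers term `P` in place of each free variable of
index at least `d`. -/
def tagClose (p : Player) (P : CTerm) : Lam → ℕ → CTerm
  | .var n, d => if n < d then .var n else P
  | .lam t, d => .lam p (t.tagClose p P (d + 1))
  | .app t u, d => .app p (t.tagClose p P d) (u.tagClose p P d)

theorem tagClose_appList (p : Player) (P : CTerm) (t : Lam) (l : List Lam) (d : ℕ) :
    (t.appList l).tagClose p P d
      = CTerm.appList p (t.tagClose p P d) (l.map fun a => a.tagClose p P d) := by
  induction l generalizing t with
  | nil => rfl
  | cons a l ih => rw [appList, ih, tagClose, List.map, CTerm.appList]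

theorem eventually_tagClose_eq_tag (p : Player) (P : CTerm) (t : Lam) :
    ∀ᶠ d in Filter.atTop, t.tagClose p P d = t.tag p := by
  induction t with
  | var n => filter_upwards [Filter.eventually_gt_atTop n] with d hd using if_pos hd
  | lam t ih =>
    filter_upwards [(Filter.tendsto_add_atTop_nat 1).eventually ih] with d hd
    rw [tagClose, hd, tag]
  | app t u iht ihu =>
    filter_upwards [iht, ihu] with d ht hu
    rw [tagClose, ht, hu, tag]

variable {P : CTerm}

theorem closedAt_tagClose (hP : P.ClosedAt 0) (p : Player) (t : Lam) (d : ℕ) :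
    (t.tagClose p P d).ClosedAt d := by
  induction t generalizing d with
  | var n =>
    rw [tagClose]
    split_ifs with h
    · exact h
    · exact hP.mono (Nat.zero_le d)
  | lam _ ih => exact ih _
  | app t u iht ihu => exact ⟨iht _, ihu _⟩

theorem closedAt_of_mem_map_tagClose_append_replicate (hP : P.ClosedAt 0) (p : Player)
    (l : List Lam) (r : ℕ) :
    ∀ a ∈ l.map (tagClose p P · 0) ++ List.replicate r P, a.ClosedAt 0 := by
  simp only [List.forall_mem_append, List.forall_mem_map, List.mem_replicate]
  exact ⟨fun a _ => closedAt_tagClose hP p a 0, fun _ ha => ha.2 ▸ hP⟩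

theorem tagClose_liftAt (hP : P.ClosedAt 0) (p : Player) (t : Lam) {c d : ℕ} (h : c ≤ d) :
    (t.liftAt c).tagClose p P (d + 1) = (t.tagClose p P d).liftAt c := by
  induction t generalizing c d with
  | var n =>
    have hPc : P.liftAt c = P := hP.liftAt_eq (Nat.zero_le c)
    grind [tagClose, liftAt, CTerm.liftAt]
  | lam t ih => rw [liftAt, tagClose, tagClose, CTerm.liftAt, ih (Nat.succ_le_succ h)]
  | app t u iht ihu => rw [liftAt, tagClose, tagClose, CTerm.liftAt, iht h, ihu h]

theorem tagClose_subst (hP : P.ClosedAt 0) (p : Player) (t u : Lam) {x d : ℕ} (h : x ≤ d) :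
    (t.subst x u).tagClose p P d = (t.tagClose p P (d + 1)).subst x (u.tagClose p P d) := by
  induction t generalizing x d u with
  | var n =>
    have hPx (a : CTerm) : P.subst x a = P := hP.subst_eq (Nat.zero_le x) a
    grind [tagClose, subst, CTerm.subst]
  | lam t ih =>
    rw [subst, tagClose, tagClose, CTerm.subst, ih _ (Nat.succ_le_succ h),
      tagClose_liftAt hP _ _ (Nat.zero_le d)]
  | app t s iht ihs => rw [subst, tagClose, tagClose, CTerm.subst, iht _ h, ihs _ h]

theorem tagClose_succ_subst_self (hP : P.ClosedAt 0) (p : Player) (t : Lam) (d : ℕ) :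
    (t.tagClose p P (d + 1)).subst d P = t.tagClose p P d := by
  induction t generalizing d with
  | var n =>
    have hPd : P.subst d P = P := hP.subst_eq (Nat.zero_le d) P
    grind [tagClose, CTerm.subst]
  | lam t ih => rw [tagClose, CTerm.subst, hP.liftAt_eq le_rfl, ih, tagClose]
  | app t s iht ihs => rw [tagClose, CTerm.subst, iht, ihs, tagClose]

end Lam

theorem LSpine.tagClose {P : CTerm} (hP : P.ClosedAt 0) (p : Player) {t u : Lam}
    (h : LSpine LBetaRoot t u) (d : ℕ) :
    CSpine SilentRoot (t.tagClose p P d) (u.tagClose p P d) := by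
  induction h with
  | root h =>
    obtain ⟨t, u⟩ := h
    rw [Lam.tagClose_subst hP p t u (Nat.zero_le d)]
    exact .root (.beta _ _ _)
  | appL a _ ih => exact .appL _ _ ih

/-! ### Evaluation of λ-terms against tuples -/

theorem LHSteps.not_lam_appList_var {s : Lam} {y : ℕ} {l : List Lam} :
    ¬ LHSteps (.lam s) ((Lam.var y).appList l) := by
  have exists_lam {r : Lam} (h : LHSteps (.lam s) r) : ∃ b, r = .lam b := by
    induction h with
    | refl => exact ⟨s, rfl⟩
    | tail _ h ih =>
      obtain ⟨b, rfl⟩ := ih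
      cases h with
      | spine h => exact (LSpine.not_lam h).elim
      | lam _ => exact ⟨_, rfl⟩
  exact fun h => (exists_lam h).elim fun b => Lam.appList_var_ne_lam y l b

theorem LHSteps.spine_of_appList_var {t : Lam} {y : ℕ} {l : List Lam}
    (h : LHSteps t ((Lam.var y).appList l)) :
    Relation.ReflTransGen (LSpine LBetaRoot) t ((Lam.var y).appList l) := by
  induction h using Relation.ReflTransGen.head_induction_on with
  | refl => exact .refl
  | head h h' ih =>
    cases h with
    | spine h => exact .head h ih
    | lam _ => exact (LHSteps.not_lam_appList_var h').elim

theorem LHSteps.exists_spine_lam {t r : Lam} (h : LHSteps t (.lam r)) :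
    ∃ s, Relation.ReflTransGen (LSpine LBetaRoot) t (.lam s) ∧ LHSteps s r := by
  induction h using Relation.ReflTransGen.head_induction_on with
  | refl => exact ⟨r, .refl, .refl⟩
  | head h _ ih =>
    obtain ⟨s, hs, hr⟩ := ih
    cases h with
    | spine h => exact ⟨s, .head h hs, hr⟩
    | lam h =>
      rcases hs.cases_head with e | ⟨_, hv, _⟩
      · cases e
        exact ⟨_, .refl, .head h hr⟩
      · exact (LSpine.not_lam hv).elim

namespace SpineRun

theorem tagClose {P : CTerm} (hP : P.ClosedAt 0) (p : Player) {t u : Lam}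
    (h : Relation.ReflTransGen (LSpine LBetaRoot) t u) (d : ℕ) :
    SpineRun (t.tagClose p P d) 0 (u.tagClose p P d) := by
  induction h using Relation.ReflTransGen.head_induction_on with
  | refl => exact .refl _
  | head h _ ih => exact .silent (h.tagClose hP p d) ih

theorem tagClose_replicate {P : CTerm} (hP : P.ClosedAt 0) (p q : Player) {t : Lam} {n y : ℕ}
    {l : List Lam} (h : HasHeadForm t ⟨n, y, l⟩) :
    SpineRun (.appList q (t.tagClose p P 0) (List.replicate n P)) (n * p.gamma q)
      (((Lam.var y).appList l).tagClose p P 0) := by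
  induction n generalizing t with
  | zero =>
    rw [Nat.zero_mul]
    exact tagClose hP p (LHSteps.spine_of_appList_var h) 0
  | succ n ih =>
    obtain ⟨s, hs, hr⟩ := LHSteps.exists_spine_lam h
    have first := ((tagClose hP p hs 0).app q P).trans (beta p q (s.tagClose p P 1) P)
    rw [Lam.tagClose_succ_subst_self hP, Nat.zero_add] at first
    rw [List.replicate_succ, Nat.succ_mul, Nat.add_comm (n * _)]
    exact (first.appList q (List.replicate n P)).trans (ih hr)

end SpineRun

/-- The evaluation of `t` on the arguments `args`, all free variables of `t` being replaced by the
`K`-tupling combinator, where `t` is black and the combinator and the arguments are white,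
terminates with `k` interaction steps. -/
def TupleEval (K : ℕ) (t : Lam) (args : List Lam) (k : ℕ) : Prop :=
  BigStep (.appList .white (t.tagClose .black ((Lam.tuple K).tag .white) 0)
    (args.map (Lam.tag · .white))) k

namespace HasHeadForm

open CTerm

variable {K : ℕ} {t : Lam} {A : HeadForm}

/-- The black abstractions of the head form interact with the white applications to the first
`numAbs` tuples. Its head variable, bound or free, is then replaced by a white tuple, which
interacts with the black applications to `args`; receiving the last `r` arguments is silent. -/
theorem spineRun_tuple (hA : HasHeadForm t A) {r j : ℕ} (hK : K = A.args.length + r + j) :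
    SpineRun (.appList .white (t.tagClose .black ((Lam.tuple K).tag .white) 0)
        (List.replicate (A.numAbs + r) ((Lam.tuple K).tag .white)))
      (A.numAbs + A.args.length)
      (partialTuple j (A.args.map (Lam.tagClose .black ((Lam.tuple K).tag .white) · 0)
        ++ List.replicate r ((Lam.tuple K).tag .white))) := by
  have hP := closedAt_tag_tuple K
  obtain ⟨hargs, htuples⟩ :=
    List.forall_mem_append.1
      (Lam.closedAt_of_mem_map_tagClose_append_replicate hP .black A.args r)
  have unwind := SpineRun.tagClose_replicate hP .black .white hA
  rw [Lam.tagClose_appList, Lam.tagClose, if_neg (Nat.not_lt_zero _)] at unwind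
  have feedArgs := SpineRun.partialTuple_appList .black (r + j) (as := []) (by simp) hargs
  rw [List.length_map, ← Nat.add_assoc, ← hK, ← tag_tuple, List.nil_append] at feedArgs
  have feedTuples := SpineRun.partialTuple_appList .white j hargs htuples
  rw [List.length_replicate] at feedTuples
  rw [List.replicate_add, appList_append]
  convert ((unwind.trans feedArgs).appList .white _).trans feedTuples using 1
  simp [Player.gamma]

theorem tupleEval_replicate (hA : HasHeadForm t A) {r : ℕ} (hK : A.args.length + r ≤ K) :
    TupleEval K t (List.replicate (A.numAbs + r) (Lam.tuple K)) (A.numAbs + A.args.length) := by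
  have hrun := hA.spineRun_tuple (Nat.add_sub_of_le hK).symm
  rw [TupleEval, List.map_replicate]
  exact hrun.bigStep (.nf (partialTuple_hnf _ _))

theorem tupleEval_selector (hA : HasHeadForm t A) (hK : A.args.length ≤ K) {i : ℕ}
    (hi : i < A.args.length) {args : List Lam} {k : ℕ} (h : TupleEval K A.args[i] args k) :
    TupleEval K t (List.replicate (A.numAbs + (K - A.args.length)) (Lam.tuple K)
        ++ Lam.selector i (K - i - 1) :: args)
      (A.numAbs + A.args.length + k) := by
  rw [TupleEval, List.map_append, List.map_replicate, List.map_cons, appList_append]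
  have reach := hA.spineRun_tuple (K := K) (r := K - A.args.length) (j := 0) (by omega)
  have hclosed := Lam.closedAt_of_mem_map_tagClose_append_replicate (closedAt_tag_tuple K) .black
    A.args (K - A.args.length)
  have select := SpineRun.partialTuple_app_selector hclosed (i := i) (K := K - i - 1)
    (by rw [List.length_append, List.length_map]; omega)
    (by rw [List.length_append, List.length_map, List.length_replicate]; omega)
  rw [List.getElem_append_left (by rwa [List.length_map]), List.getElem_map] at select
  exact (((reach.app .white _).trans select).appList .white _).bigStep h

end HasHeadForm

/-! ### Separability by the number of interactions -/

/-- For all large enough tuple sizes, some arguments make `t` and `u` evaluate with different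
numbers of interaction steps. Quantifying over all large sizes is what allows one size to serve for
every node on a path of the Böhm trees. -/
def Separable (t u : Lam) : Prop :=
  ∀ᶠ K in Filter.atTop, ∃ args i i', i ≠ i' ∧ TupleEval K t args i ∧ TupleEval K u args i'

namespace Separable

variable {t u : Lam} {A B : HeadForm}

/-- On `A.numAbs + B.numAbs` tuples each term performs one interaction per abstraction and per
argument of its head form, and an η-expansion adds one of each. -/
theorem of_numAbs_ne (hA : HasHeadForm t A) (hB : HasHeadForm u B)
    (hlen : A.numAbs + B.args.length = B.numAbs + A.args.length) (hn : A.numAbs ≠ B.numAbs) :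
    Separable t u := by
  filter_upwards [Filter.eventually_ge_atTop (A.args.length + B.numAbs)] with K hK
  have ht := hA.tupleEval_replicate hK
  have hu := hB.tupleEval_replicate (r := A.numAbs) (K := K) (by omega)
  rw [Nat.add_comm B.numAbs A.numAbs] at hu
  exact ⟨_, _, _, by omega, ht, hu⟩

theorem of_args (hA : HasHeadForm t A) (hB : HasHeadForm u B) (hn : A.numAbs = B.numAbs)
    (hlen : A.args.length = B.args.length) {i : ℕ} (hi : i < A.args.length)
    (hi' : i < B.args.length) (h : Separable A.args[i] B.args[i]) : Separable t u := by
  filter_upwards [h, Filter.eventually_ge_atTop A.args.length] with K ⟨args, k, k', hne, hk, hk'⟩ hK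
  have ht := hA.tupleEval_selector hK hi hk
  have hu := hB.tupleEval_selector (hlen ▸ hK) hi' hk'
  rw [← hn, ← hlen] at hu
  exact ⟨_, _, _, by omega, ht, hu⟩

end Separable

theorem BohmEtaLe.bohmClause_of_not_separable {t u : Lam} (h : BohmEtaLe t u)
    (hs : ¬ Separable t u) : BohmClause (fun a b => BohmEtaLe a b ∧ ¬ Separable a b) t u := by
  by_cases ht : t.HConv
  · obtain ⟨A, hA⟩ := ht.exists_hasHeadForm
    obtain ⟨B, hB, hAB⟩ := h.exists_etaRel hA
    have hn : A.numAbs = B.numAbs := by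
      by_contra hn
      exact hs (.of_numAbs_ne hA hB hAB.numAbs_add_length hn)
    obtain ⟨-, hy, hargs⟩ := hAB.rel renameCongr hn
    obtain ⟨hlen, hargs⟩ := List.forall₂_iff_get.1 hargs
    refine .of_rel hA hB ⟨hn, hy, List.forall₂_iff_get.2 ⟨hlen, fun i hi hi' => ?_⟩⟩
    exact ⟨hargs i hi hi', fun h => hs (.of_args hA hB hn hlen hi hi' h)⟩
  · exact .inl ht

/-! ### Separating contexts -/

theorem LCtx.fill_tag_iterate_lam (p : Player) (n : ℕ) (t : CTerm) :
    ((LCtx.lam^[n] .hole).tag p).fill t = .absN p n t := by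
  induction n with
  | zero => rfl
  | succ n ih => rw [Function.iterate_succ_apply', tag, CCtx.fill, ih, CTerm.absN]

theorem LCtx.fill_tag_foldl_appL (p : Player) (C : LCtx) (l : List Lam) (t : CTerm) :
    ((l.foldl .appL C).tag p).fill t = .appList p ((C.tag p).fill t) (l.map (Lam.tag · p)) := by
  induction l generalizing C with
  | nil => rfl
  | cons a l ih => rw [List.foldl, ih, tag, CCtx.fill, List.map, CTerm.appList]

theorem SpineRun.absN_tagClose {P : CTerm} (hP : P.ClosedAt 0) (p q : Player) (t : Lam) (n : ℕ) :
    SpineRun (.appList q (.absN q n (t.tagClose p P n)) (List.replicate n P)) 0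
      (t.tagClose p P 0) := by
  induction n with
  | zero => exact .refl _
  | succ n ih =>
    have first := beta_self q (.absN q n (t.tagClose p P (n + 1))) P
    rw [CTerm.absN_subst _ _ _ _ hP, Nat.zero_add, Lam.tagClose_succ_subst_self hP] at first
    exact (first.appList q (List.replicate n P)).trans ih

theorem TupleEval.bigStep_fill {K k n : ℕ} {t : Lam} {args : List Lam} (h : TupleEval K t args k)
    (hn : t.tagClose .black ((Lam.tuple K).tag .white) n = t.tag .black) :
    BigStep ((((List.replicate n (Lam.tuple K) ++ args).foldl .appL (LCtx.lam^[n] .hole)).tag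
      .white).fill (t.tag .black)) k := by
  rw [LCtx.fill_tag_foldl_appL, LCtx.fill_tag_iterate_lam, List.map_append, List.map_replicate,
    CTerm.appList_append, ← hn, ← Nat.zero_add k]
  have close := SpineRun.absN_tagClose (CTerm.closedAt_tag_tuple K) .black .white t n
  exact (close.appList .white _).bigStep h

theorem Separable.exists_lCtx {t u : Lam} (h : Separable t u) :
    ∃ (C : LCtx) (i i' : ℕ), i ≠ i' ∧
      BigStep ((C.tag .white).fill (t.tag .black)) i ∧
      BigStep ((C.tag .white).fill (u.tag .black)) i' := by
  obtain ⟨K, args, i, i', hne, ht, hu⟩ := h.exists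
  obtain ⟨n, hnt, hnu⟩ := ((t.eventually_tagClose_eq_tag .black ((Lam.tuple K).tag .white)).and
    (u.eventually_tagClose_eq_tag .black ((Lam.tuple K).tag .white))).exists
  exact ⟨_, i, i', hne, ht.bigStep_fill hnt, hu.bigStep_fill hnu⟩

/-- Interaction Böhm-out: λ-terms in the extensional Böhm preorder but not in the
Böhm preorder are separated by the number of interaction steps, using a white
lifted ordinary context against the black liftings of the terms. -/
theorem interaction_bohm_out (t u : Lam) (h₁ : BohmEtaLe t u) (h₂ : ¬ BohmLe t u) :
    ∃ (C : LCtx) (i i' : ℕ), i ≠ i' ∧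
      BigStep ((C.tag .white).fill (t.tag .black)) i ∧
      BigStep ((C.tag .white).fill (u.tag .black)) i' := by
  refine Separable.exists_lCtx ?_
  by_contra hs
  exact h₂ ⟨fun a b => BohmEtaLe a b ∧ ¬ Separable a b,
    fun _ _ ⟨h, hs⟩ => h.bohmClause_of_not_separable hs, h₁, hs⟩
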